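/- arXiv:2303.10467 — 3 statements merged into one kernel-verified Lean document; each statement's English description precedes it below -/
import Mathlib

section
/- Suppose λ_0, …, λ_{ns−1} are pairwise distinct and satisfy the local constraints. Then the array code C is an (n,k,ℓ) MDS array code: for every subset F = {f_1 < … < f_r} ⊆ {0,…,n−1} of size r, the rℓ × rℓ matrix [H_{f_1} | … | H_{f_r}], where H_{a(s+1)+b} = A_{a,b}^(r), is invertible; equivalently, any two codewords of C that agree on all coordinates outside F are equal, so any k coordinates of a codeword determine the whole codeword. -/
open Matrix

/-- The `u`-th digit of `i` in base `s`. -/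
def digit (s i u : ℕ) : ℕ := i / s ^ u % s

open scoped Classical in
/-- The `z`-th entry of the `(i,j)` block (a length-`t` column vector, `0 ≤ z < t`) of the
block matrix `A_{a,b}^{(t)}`; the group size is `g` (`g = s` for the first construction and
`g = s + 1` for the second), so the relevant `λ`-index is `a·s·g + b·s + j_a`. -/
noncomputable def Aent {F : Type*} [Field F] (lam : ℕ → F) (s g a b i j z : ℕ) : F :=
  if i = j then lam (a * s * g + b * s + digit s j a) ^ z
  else if digit s i a = b ∧ digit s j a ≠ b ∧ (∀ u, u ≠ a → digit s i u = digit s j u) then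
    -(lam (a * s * g + b * s + digit s j a) ^ z)
  else 0

/-- `A_{a,b}^{(t)}` as an `ℓt × ℓ` matrix; row `ρ` encodes block row `ρ / t` and
inner row `ρ % t`. -/
noncomputable def Amat {F : Type*} [Field F] (lam : ℕ → F) (s g ℓ a b t : ℕ) :
    Matrix (Fin (ℓ * t)) (Fin ℓ) F :=
  Matrix.of fun ρ j => Aent lam s g a b ((ρ : ℕ) / t) (j : ℕ) ((ρ : ℕ) % t)

/-- The `m`-th smallest element of the finite set `B ⊆ ℕ` (junk value `0` if `m ≥ |B|`). -/
def enum (B : Finset ℕ) (m : ℕ) : ℕ := (B.sort (· ≤ ·)).getD m 0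

/-- `A_{a,B}^{(t)} = [A_{a,b₁}^{(t)} | ⋯ | A_{a,b_v}^{(t)}]` as an `ℓt × ℓ|B|` matrix:
row `ρ` encodes block row `ρ / t` and inner row `ρ % t`; column `κ` selects the
`κ / ℓ`-th member of `B` and inner column `κ % ℓ`. -/
noncomputable def AmatB {F : Type*} [Field F] (lam : ℕ → F) (s g ℓ a t : ℕ) (B : Finset ℕ) :
    Matrix (Fin (ℓ * t)) (Fin (ℓ * B.card)) F :=
  Matrix.of fun ρ κ =>
    Aent lam s g a (enum B ((κ : ℕ) / ℓ)) ((ρ : ℕ) / t) ((κ : ℕ) % ℓ) ((ρ : ℕ) % t)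

/-- The local (in-group) constraints: every square matrix `A_{a,B}` (for a group index
`a < groups` and a nonempty `B ⊆ {0, …, g-1}`) is invertible. -/
def LocalConstraints {F : Type*} [Field F] (lam : ℕ → F) (s g ℓ groups : ℕ) : Prop :=
  ∀ a < groups, ∀ B ⊆ Finset.range g, B.Nonempty → (AmatB lam s g ℓ a B.card B).det ≠ 0

/-- The horizontal concatenation `[H_{f 0} | H_{f 1} | ⋯ | H_{f (r-1)}]` of `r` parity check
matrices (each `H_{a·g+b} = A_{a,b}^{(r)}`, of size `ℓr × ℓ`), as an `ℓr × ℓr` square matrix. -/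
noncomputable def Hcat {F : Type*} [Field F] (lam : ℕ → F) (s g ℓ r : ℕ) (f : ℕ → ℕ) :
    Matrix (Fin (ℓ * r)) (Fin (ℓ * r)) F :=
  Matrix.of fun ρ κ =>
    Aent lam s g (f ((κ : ℕ) / ℓ) / g) (f ((κ : ℕ) / ℓ) % g)
      ((ρ : ℕ) / r) ((κ : ℕ) % ℓ) ((ρ : ℕ) % r)

/-- Membership in the array code: `(C_0, …, C_{n−1})` satisfies the parity check equations
`Σ_{a,b} A_{a,b}^{(r)} · C_{a·g+b} = 0` (node `m = a·g + b`). -/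
def InCode {F : Type*} [Field F] (lam : ℕ → F) (s g ℓ r n : ℕ) (C : ℕ → ℕ → F) : Prop :=
  ∀ ρ < ℓ * r, ∑ m ∈ Finset.range n, ∑ j ∈ Finset.range ℓ,
    Aent lam s g (m / g) (m % g) (ρ / r) j (ρ % r) * C m j = 0

section Abstract
open Polynomial

variable {R : Type*} [Ring R]

/-- Row injectivity of the block Vandermonde matrix. -/
def RowInj {ι : Type*} (Φ : ι → R) (B : Finset ι) : Prop :=
  ∀ u : R[X], u.degree < (B.card : WithBot ℕ) → (∀ b ∈ B, u.eval (Φ b) = 0) → u = 0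

theorem right_div {P : R[X]} {v : ℕ} (hP : P.Monic) (hv : P.natDegree = v) (t : ℕ) :
    ∀ u : R[X], u.degree < ((v + t : ℕ) : WithBot ℕ) →
      ∃ q rem : R[X], q.degree < (t : WithBot ℕ) ∧ rem.degree < (v : WithBot ℕ) ∧
        u = q * P + rem := by
  induction t with
  | zero => intro u hu; exact ⟨0, u, by simp, by simpa using hu, by simp⟩
  | succ t ih =>
    intro u hu
    rw [degree_lt_iff_coeff_zero] at hu
    obtain ⟨q, rem, hq, hrem, h⟩ := ih (u - C (u.coeff (v + t)) * X ^ t * P) (by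
      rw [degree_lt_iff_coeff_zero]
      intro m hm
      rw [mul_assoc, coeff_sub, coeff_C_mul, X_pow_mul, coeff_mul_X_pow', if_pos (by omega)]
      rcases Nat.eq_or_lt_of_le hm with h | h
      · subst h
        have : P.coeff v = 1 := by rw [← hv]; exact hP
        simp [this]
      · rw [hu m (by omega), coeff_eq_zero_of_natDegree_lt (n := m - t) (by omega)]; simp)
    refine ⟨q + C (u.coeff (v + t)) * X ^ t, rem, ?_, hrem, ?_⟩
    · refine lt_of_le_of_lt (degree_add_le _ _) (max_lt ?_ ?_)
      · exact hq.trans (by exact_mod_cast Nat.lt_succ_self t)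
      · exact lt_of_le_of_lt (degree_C_mul_X_pow_le _ _) (by exact_mod_cast Nat.lt_succ_self t)
    · rw [add_mul, add_right_comm, ← h]; abel

theorem eval_mul_root (q P : R[X]) (x : R) (h : P.eval x = 0) : (q * P).eval x = 0 := by
  induction q using Polynomial.induction_on' with
  | add p q hp hq => rw [add_mul, eval_add, hp, hq, add_zero]
  | monomial n c =>
    rw [← C_mul_X_pow_eq_monomial, mul_assoc, eval_C_mul, X_pow_mul, eval_mul_X_pow, h]; simp

theorem eval_mul_comm' (q P : R[X]) (x : R) (h : ∀ k, Commute (P.coeff k) x) :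
    (q * P).eval x = q.eval x * P.eval x :=
  eval₂_mul_noncomm _ _ h

theorem exists_annih [Finite R] {ι : Type*} {Φ : ι → R} {B : Finset ι} (h : RowInj Φ B) :
    ∃ p : R[X], p.degree < (B.card : WithBot ℕ) ∧ ∀ b ∈ B, (X ^ B.card + p).eval (Φ b) = 0 := by
  classical
  have := Fintype.ofFinite R
  let e := degreeLTEquiv R B.card
  have : Fintype (degreeLT R B.card) := Fintype.ofEquiv _ e.toEquiv.symm
  let g : degreeLT R B.card → (B → R) := fun p b => (p : R[X]).eval (Φ b)
  have hg : Function.Bijective g := by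
    rw [Fintype.bijective_iff_injective_and_card]
    constructor
    · intro p q hpq
      have := h ((p - q : degreeLT R B.card) : R[X]) (mem_degreeLT.1 (p - q).2) (by
        intro b hb
        have := congrFun hpq ⟨b, hb⟩
        simp only [g] at this
        simp [this])
      exact sub_eq_zero.1 (Subtype.ext this)
    · rw [Fintype.card_congr e.toEquiv]; simp
  obtain ⟨p, hp⟩ := hg.2 (fun b => - (Φ b) ^ B.card)
  refine ⟨p, mem_degreeLT.1 p.2, fun b hb => ?_⟩
  have := congrFun hp ⟨b, hb⟩
  simp only [g] at this
  have h2 : eval (Φ b) (X ^ B.card : R[X]) = Φ b ^ B.card := by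
    rw [← one_mul (X ^ B.card : R[X]), eval_mul_X_pow]; simp
  rw [eval_add, h2, this, add_neg_cancel]

theorem annih_commute {ι : Type*} {Φ : ι → R} {B : Finset ι} (h : RowInj Φ B)
    {p : R[X]} (hp : p.degree < (B.card : WithBot ℕ))
    (hr : ∀ b ∈ B, (X ^ B.card + p).eval (Φ b) = 0) (T : R) (hT : ∀ b ∈ B, Commute T (Φ b)) (k : ℕ) :
    Commute ((X ^ B.card + p).coeff k) T := by
  have key : C T * (X ^ B.card + p) - (X ^ B.card + p) * C T = 0 := by
    apply h
    · have : C T * (X ^ B.card + p) - (X ^ B.card + p) * C T = C T * p - p * C T := by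
        rw [mul_add, add_mul, X_pow_mul_C]; abel
      rw [this]
      rw [degree_lt_iff_coeff_zero] at hp ⊢
      intro m hm
      simp [hp m hm]
    · intro b hb
      rw [eval_sub, eval_C_mul, hr b hb, eval_mul_comm' _ _ _ (by
        intro k
        rw [coeff_C]
        split_ifs
        · exact hT b hb
        · exact Commute.zero_left _), hr b hb]
      simp
  have := congrArg (fun q => coeff q k) key
  simp only [coeff_sub, coeff_C_mul, coeff_mul_C, coeff_zero] at this
  exact (sub_eq_zero.1 this).symm

theorem monic_aux {p : R[X]} {v : ℕ} (hp : p.degree < (v : WithBot ℕ)) : (X ^ v + p).Monic :=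
  monic_X_pow_add hp

theorem annih_regular [Nontrivial R] {ι : Type*} {Φ : ι → R} {B : Finset ι} (h : RowInj Φ B)
    {p : R[X]} (hp : p.degree < (B.card : WithBot ℕ))
    (hr : ∀ b ∈ B, (X ^ B.card + p).eval (Φ b) = 0) (T : R) (hT : ∀ b ∈ B, Commute T (Φ b))
    (hu : ∀ b ∈ B, IsUnit (Φ b - T)) (W : R) (hW : W * (X ^ B.card + p).eval T = 0) : W = 0 := by
  have hm := monic_aux hp
  have hnd : (X ^ B.card + p).natDegree = B.card := natDegree_eq_of_degree_eq_some (by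
    rw [degree_add_eq_left_of_degree_lt] <;> simp [hp])
  obtain ⟨U, rem, hU, hrem, he⟩ := right_div (monic_X_sub_C T) (natDegree_X_sub_C T) B.card
    (C W * (X ^ B.card + p)) (by
      rw [degree_lt_iff_coeff_zero]
      intro m hm
      rw [coeff_C_mul, coeff_eq_zero_of_natDegree_lt (n := m) (by omega), mul_zero])
  have hc : rem = C (rem.coeff 0) := eq_C_of_degree_le_zero (by
    rw [degree_le_iff_coeff_zero]
    intro m hm
    rw [degree_lt_iff_coeff_zero] at hrem
    exact hrem m (by exact_mod_cast hm))
  have h0 : rem = 0 := by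
    have := congrArg (eval T) he
    rw [eval_C_mul, hW, eval_add, eval_mul_root _ _ _ (by simp), hc, eval_C, zero_add] at this
    rw [hc, ← this, C_0]
  rw [h0, add_zero] at he
  have hU0 : U = 0 := by
    apply h _ hU
    intro b hb
    have := congrArg (eval (Φ b)) he
    rw [eval_C_mul, hr b hb, mul_zero, eval_mul_comm' _ _ _ (by
      intro k
      rw [coeff_sub, coeff_X, coeff_C]
      refine Commute.sub_left ?_ ?_
      · split_ifs
        · exact Commute.one_left _
        · exact Commute.zero_left _
      · split_ifs
        · exact hT b hb
        · exact Commute.zero_left _), eval_sub, eval_X, eval_C] at this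
    exact (hu b hb).mul_left_eq_zero.1 this.symm
  rw [hU0, zero_mul] at he
  have := congrArg (fun q => coeff q B.card) he
  have h1 : (X ^ B.card + p).coeff B.card = 1 := by
    have := hm.coeff_natDegree
    rwa [hnd] at this
  simpa only [coeff_C_mul, h1, mul_one, coeff_zero] using this

theorem RowInj.union [Finite R] [Nontrivial R] {ι : Type*} [DecidableEq ι] {Φ : ι → R}
    {B G : Finset ι}
    (hB : RowInj Φ B) (hG : RowInj Φ G) (hd : Disjoint B G)
    (hc : ∀ b ∈ B, ∀ m ∈ G, Commute (Φ m) (Φ b)) (hu : ∀ b ∈ B, ∀ m ∈ G, IsUnit (Φ b - Φ m)) :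
    RowInj Φ (B ∪ G) := by
  intro u hdeg hev
  rw [Finset.card_union_of_disjoint hd] at hdeg
  obtain ⟨p, hp, hr⟩ := exists_annih hB
  have hm := monic_aux hp
  have hnd : (X ^ B.card + p).natDegree = B.card := natDegree_eq_of_degree_eq_some (by
    rw [degree_add_eq_left_of_degree_lt] <;> simp [hp])
  obtain ⟨q, rem, hq, hrem, he⟩ := right_div hm hnd G.card u hdeg
  have h0 : rem = 0 := by
    apply hB _ hrem
    intro b hb
    have := hev b (Finset.mem_union_left _ hb)
    rwa [he, eval_add, eval_mul_root _ _ _ (hr b hb), zero_add] at this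
  have hq0 : q = 0 := by
    apply hG _ hq
    intro m hm
    have := hev m (Finset.mem_union_right _ hm)
    rw [he, h0, add_zero, eval_mul_comm' _ _ _
      (annih_commute hB hp hr _ (fun b hb => hc b hb m hm))] at this
    exact annih_regular hB hp hr (Φ m) (fun b hb => hc b hb m hm) (fun b hb => hu b hb m hm) _ this
  rw [he, h0, hq0]; simp

theorem rowInj_of_local [Finite R] [Nontrivial R] {ι : Type*} [DecidableEq ι] {Φ : ι → R}
    (grp : ι → ℕ) (S : Finset ι)
    (hc : ∀ b ∈ S, ∀ m ∈ S, grp b ≠ grp m → Commute (Φ m) (Φ b))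
    (hu : ∀ b ∈ S, ∀ m ∈ S, grp b ≠ grp m → IsUnit (Φ b - Φ m))
    (hl : ∀ a, ∀ B ⊆ S, B.Nonempty → (∀ b ∈ B, grp b = a) → RowInj Φ B) :
    ∀ N : ℕ, ∀ G ⊆ S, G.card = N → RowInj Φ G := by
  intro N
  induction N using Nat.strong_induction_on with
  | _ N ih =>
    intro G hG hN
    rcases G.eq_empty_or_nonempty with rfl | ⟨b0, hb0⟩
    · intro u hu _
      simpa using hu
    · have hsplit : G = G.filter (fun b => grp b = grp b0) ∪ G.filter (fun b => ¬ grp b = grp b0) :=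
        (Finset.filter_union_filter_not_eq _ _).symm
      rw [hsplit]
      apply RowInj.union
      · refine hl (grp b0) _ ((Finset.filter_subset _ _).trans hG) ⟨b0, by simp [hb0]⟩ ?_
        intro b hb; exact (Finset.mem_filter.1 hb).2
      · refine ih _ ?_ _ ((Finset.filter_subset _ _).trans hG) rfl
        rw [← hN]
        apply Finset.card_lt_card
        rw [Finset.filter_ssubset]
        exact ⟨b0, hb0, by simp⟩
      · exact Finset.disjoint_filter_filter_not _ _ _
      · intro b hb m hm
        rw [Finset.mem_filter] at hb hm
        exact hc b (hG hb.1) m (hG hm.1) (fun h => hm.2 (h ▸ hb.2))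
      · intro b hb m hm
        rw [Finset.mem_filter] at hb hm
        exact hu b (hG hb.1) m (hG hm.1) (fun h => hm.2 (h ▸ hb.2))

end Abstract
section Concrete

theorem enum_lt_aux (B : Finset ℕ) {m : ℕ} (hm : m < B.card) :
    ∃ h : m < (B.sort (· ≤ ·)).length, enum B m = (B.sort (· ≤ ·))[m] := by
  have h : m < (B.sort (· ≤ ·)).length := by simpa using hm
  exact ⟨h, by unfold enum; exact List.getD_eq_getElem _ _ h⟩

theorem enum_mem (B : Finset ℕ) {m : ℕ} (hm : m < B.card) : enum B m ∈ B := by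
  obtain ⟨h, he⟩ := enum_lt_aux B hm
  rw [he, ← Finset.mem_sort (· ≤ ·)]
  exact List.getElem_mem h

theorem enum_surj (B : Finset ℕ) {b : ℕ} (hb : b ∈ B) : ∃ m < B.card, enum B m = b := by
  rw [← Finset.mem_sort (· ≤ ·), List.mem_iff_getElem] at hb
  obtain ⟨m, hm, he⟩ := hb
  have hm' : m < B.card := by simpa using hm
  obtain ⟨h, he'⟩ := enum_lt_aux B hm'
  exact ⟨m, hm', he'.trans he⟩

theorem enum_inj (B : Finset ℕ) {m m' : ℕ} (hm : m < B.card) (hm' : m' < B.card)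
    (h : enum B m = enum B m') : m = m' := by
  obtain ⟨h1, he⟩ := enum_lt_aux B hm
  obtain ⟨h2, he'⟩ := enum_lt_aux B hm'
  rw [he, he'] at h
  exact (List.Nodup.getElem_inj_iff (Finset.sort_nodup _ _)).1 h

theorem sum_enum {M : Type*} [AddCommMonoid M] (B : Finset ℕ) (g : ℕ → M) :
    ∑ c ∈ Finset.range B.card, g (enum B c) = ∑ b ∈ B, g b := by
  refine Finset.sum_bij (fun c _ => enum B c) ?_ ?_ ?_ ?_
  · intro c hc; exact enum_mem B (Finset.mem_range.1 hc)
  · intro c hc c' hc' h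
    exact enum_inj B (Finset.mem_range.1 hc) (Finset.mem_range.1 hc') h
  · intro b hb
    obtain ⟨m, hm, h⟩ := enum_surj B hb
    exact ⟨m, Finset.mem_range.2 hm, h⟩
  · intros; rfl

theorem sum_range_mul_aux {M : Type*} [AddCommMonoid M] (l r : ℕ) (g : ℕ → ℕ → M) :
    ∑ κ ∈ Finset.range (l * r), g (κ / l) (κ % l) =
      ∑ c ∈ Finset.range r, ∑ j ∈ Finset.range l, g c j := by
  induction r with
  | zero => simp
  | succ r ih =>
    rw [Nat.mul_succ, Finset.sum_range_add, ih, Finset.sum_range_succ]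
    congr 1
    apply Finset.sum_congr rfl
    intro j hj
    have hj := Finset.mem_range.1 hj
    rw [Nat.mul_add_div (by omega), Nat.div_eq_of_lt hj, Nat.mul_add_mod, Nat.mod_eq_of_lt hj,
      add_zero]

variable {F : Type*} [Field F] {N s : ℕ}

/-- Operator on the `a`-th tensor factor. -/
def emb (a : Fin N) (K : Matrix (Fin s) (Fin s) F) : Matrix (Fin N → Fin s) (Fin N → Fin s) F :=
  Matrix.of fun i j => if ∀ u, u ≠ a → i u = j u then K (i a) (j a) else 0

theorem emb_mul_emb {a a' : Fin N} (h : a ≠ a') (K K' : Matrix (Fin s) (Fin s) F)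
    (i k : Fin N → Fin s) :
    (emb a K * emb a' K') i k =
      if ∀ u, u ≠ a → u ≠ a' → i u = k u then K (i a) (k a) * K' (i a') (k a') else 0 := by
  rw [Matrix.mul_apply, Finset.sum_eq_single (Function.update i a (k a))]
  · simp only [emb, Matrix.of_apply]
    rw [if_pos (by intro u hu; rw [Function.update_of_ne hu])]
    rw [Function.update_self, Function.update_of_ne h.symm, mul_ite, mul_zero]
    congr 1
    apply propext
    constructor
    · intro hh u hu hu'
      have := hh u hu'
      rwa [Function.update_of_ne hu] at this
    · intro hh u hu
      by_cases hua : u = a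
      · subst hua; simp
      · rw [Function.update_of_ne hua]; exact hh u hua hu
  · intro j _ hj
    simp only [emb, Matrix.of_apply]
    split_ifs with h1 h2
    · exfalso
      apply hj
      funext u
      by_cases hua : u = a
      · subst hua; simp [h2 u h]
      · rw [Function.update_of_ne hua, h1 u hua]
    all_goals simp
  · simp

theorem emb_commute {a a' : Fin N} (h : a ≠ a') (K K' : Matrix (Fin s) (Fin s) F) :
    Commute (emb a K) (emb a' K') := by
  ext i k
  rw [emb_mul_emb h, emb_mul_emb h.symm]
  rw [mul_comm]
  congr 1
  apply propext
  constructor <;> intro hh u hu hu' <;> exact hh u hu' hu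

theorem emb_diagonal (a : Fin N) (d : Fin s → F) :
    emb a (Matrix.diagonal d) = Matrix.diagonal (fun i => d (i a)) := by
  ext i j
  simp only [emb, Matrix.of_apply, Matrix.diagonal_apply]
  by_cases h : i = j
  · subst h; simp
  · rw [if_neg h]
    split_ifs with h1 h2
    · exfalso; apply h; funext u
      by_cases hu : u = a
      · rw [hu, h2]
      · exact h1 u hu
    all_goals rfl

/-- The off-diagonal part. -/
def Eop (F : Type*) [Field F] (s : ℕ) (a : Fin N) (b : ℕ) :
    Matrix (Fin N → Fin s) (Fin N → Fin s) F :=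
  emb a (Matrix.of fun i j => if (i : ℕ) = b ∧ (j : ℕ) ≠ b then 1 else 0)

/-- The eigenvalue part. -/
def Lop (lam : ℕ → F) (s g : ℕ) (a : Fin N) (b : ℕ) :
    Matrix (Fin N → Fin s) (Fin N → Fin s) F :=
  emb a (Matrix.diagonal fun j => lam (a * s * g + b * s + j))

theorem Eop_sq (a : Fin N) (b : ℕ) : Eop F s a b * Eop F s a b = 0 := by
  ext i k
  rw [Matrix.mul_apply]
  apply Finset.sum_eq_zero
  intro j _
  simp only [Eop, emb, Matrix.of_apply]
  by_cases h : (j a : ℕ) = b <;> simp [h]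

theorem S_mul (a : Fin N) (b : ℕ) : (1 - Eop F s a b) * (1 + Eop F s a b) = 1 := by
  have := Eop_sq (F := F) (s := s) a b
  rw [sub_mul, mul_add, mul_add, this]; simp

theorem S_mul' (a : Fin N) (b : ℕ) : (1 + Eop F s a b) * (1 - Eop F s a b) = 1 := by
  have := Eop_sq (F := F) (s := s) a b
  rw [add_mul, mul_sub, mul_sub, this]; simp

theorem S_unit (a : Fin N) (b : ℕ) : IsUnit (1 - Eop F s a b) :=
  ⟨⟨_, _, S_mul a b, S_mul' a b⟩, rfl⟩

/-- The conjugated node operator. -/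
def Pop (lam : ℕ → F) (s g : ℕ) (a : Fin N) (b : ℕ) :
    Matrix (Fin N → Fin s) (Fin N → Fin s) F :=
  (1 - Eop F s a b) * Lop lam s g a b * (1 + Eop F s a b)

theorem Pop_pow (lam : ℕ → F) (g : ℕ) (a : Fin N) (b z : ℕ) :
    Pop lam s g a b ^ z = (1 - Eop F s a b) * Lop lam s g a b ^ z * (1 + Eop F s a b) := by
  induction z with
  | zero => simp [S_mul]
  | succ z ih =>
    rw [pow_succ, ih, Pop, pow_succ]
    have h := S_mul' (F := F) (s := s) a b
    calc _ = (1 - Eop F s a b) * Lop lam s g a b ^ z * ((1 + Eop F s a b) * (1 - Eop F s a b)) *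
          Lop lam s g a b * (1 + Eop F s a b) := by noncomm_ring
      _ = _ := by rw [h]; noncomm_ring

theorem E_comm {a a' : Fin N} (h : a ≠ a') (b b' : ℕ) :
    Commute (Eop F s a b) (Eop F s a' b') := emb_commute h _ _
theorem EL_comm {a a' : Fin N} (h : a ≠ a') (lam : ℕ → F) (g b b' : ℕ) :
    Commute (Eop F s a b) (Lop lam s g a' b') := emb_commute h _ _
theorem L_comm {a a' : Fin N} (h : a ≠ a') (lam : ℕ → F) (g b b' : ℕ) :
    Commute (Lop lam s g a b) (Lop lam s g a' b') := emb_commute h _ _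

theorem Pop_comm_of {T : Matrix (Fin N → Fin s) (Fin N → Fin s) F} {lam : ℕ → F} {g : ℕ}
    {a : Fin N} {b : ℕ} (h1 : Commute (Eop F s a b) T) (h2 : Commute (Lop lam s g a b) T) :
    Commute (Pop lam s g a b) T :=
  ((((Commute.one_left T).sub_left h1).mul_left h2).mul_left ((Commute.one_left T).add_left h1))

theorem Pop_commute {a a' : Fin N} (h : a ≠ a') (lam : ℕ → F) (g b b' : ℕ) :
    Commute (Pop lam s g a b) (Pop lam s g a' b') := by
  apply Pop_comm_of
  · exact (Pop_comm_of (E_comm h.symm _ _) (EL_comm h lam g b b').symm).symm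
  · exact (Pop_comm_of (EL_comm h.symm lam g b' b) (L_comm h.symm lam g b' b)).symm

theorem Pop_mul_S (lam : ℕ → F) (g : ℕ) (a : Fin N) (b : ℕ) :
    Pop lam s g a b * (1 - Eop F s a b) = (1 - Eop F s a b) * Lop lam s g a b := by
  rw [Pop, mul_assoc, S_mul', mul_one]

theorem Pop_sub_unit {a a' : Fin N} (h : a ≠ a') (lam : ℕ → F) (g b b' : ℕ)
    (hne : ∀ j < s, ∀ j' < s, lam (a * s * g + b * s + j) ≠ lam (a' * s * g + b' * s + j')) :
    IsUnit (Pop lam s g a b - Pop lam s g a' b') := by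
  have hS := S_unit (F := F) (s := s) a b
  have hS' := S_unit (F := F) (s := s) a' b'
  have hSS : Commute (1 - Eop F s a b) (1 - Eop F s a' b') :=
    (Commute.one_left _).sub_left ((Commute.one_right _).sub_right (E_comm h b b'))
  have hLS : Commute (Lop lam s g a b) (1 - Eop F s a' b') :=
    (Commute.one_right _).sub_right (EL_comm h.symm lam g b' b).symm
  have hLS' : Commute (Lop lam s g a' b') (1 - Eop F s a b) :=
    (Commute.one_right _).sub_right (EL_comm h lam g b b').symm
  have hL : IsUnit (Lop lam s g a b - Lop lam s g a' b') := by
    rw [Lop, Lop, emb_diagonal, emb_diagonal, Matrix.diagonal_sub, Matrix.isUnit_diagonal,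
      Pi.isUnit_iff]
    intro i
    rw [isUnit_iff_ne_zero, sub_ne_zero]
    exact hne _ (i a).2 _ (i a').2
  have key : (Pop lam s g a b - Pop lam s g a' b') * ((1 - Eop F s a b) * (1 - Eop F s a' b')) =
      ((1 - Eop F s a b) * (1 - Eop F s a' b')) * (Lop lam s g a b - Lop lam s g a' b') := by
    rw [sub_mul, ← mul_assoc, Pop_mul_S, mul_assoc, hLS.eq, hSS.eq, ← mul_assoc (Pop lam s g a' b'),
      Pop_mul_S, mul_assoc _ (Lop lam s g a' b'), hLS'.eq, ← mul_assoc, ← mul_assoc, hSS.eq,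
      mul_sub _ (Lop lam s g a b)]
  have hu : IsUnit ((1 - Eop F s a b) * (1 - Eop F s a' b')) := hS.mul hS'
  have := hu.mul hL
  rw [← key] at this
  exact (hu.mul_right_iff).1 this

theorem digit_enc (i : Fin N → Fin s) (u : Fin N) :
    digit s (finFunctionFinEquiv i : Fin (s ^ N)) u = i u := by
  have := congrFun (finFunctionFinEquiv.symm_apply_apply i) u
  exact congrArg Fin.val this

theorem digit_enc_ge (i : Fin N → Fin s) (u : ℕ) (hu : N ≤ u) :
    digit s (finFunctionFinEquiv i : Fin (s ^ N)) u = 0 := by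
  unfold digit
  rcases Nat.eq_zero_or_pos s with h | h
  · subst h
    rcases Nat.eq_zero_or_pos N with h | h
    · subst h; simp
    · exact (i ⟨0, h⟩).elim0
  · rw [Nat.div_eq_of_lt, Nat.zero_mod]
    exact (finFunctionFinEquiv i).2.trans_le (Nat.pow_le_pow_right h hu)

theorem Aent_eq (lam : ℕ → F) (g : ℕ) (a : Fin N) (b z : ℕ) (i j : Fin N → Fin s) :
    Aent lam s g a b (finFunctionFinEquiv i : Fin (s ^ N)) (finFunctionFinEquiv j : Fin (s ^ N)) z =
      ((1 - Eop F s a b) * Lop lam s g a b ^ z) i j := by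
  rw [Lop, emb_diagonal, Matrix.diagonal_pow, Matrix.mul_diagonal, Aent, digit_enc, digit_enc]
  have hiff : (∀ u, u ≠ (a : ℕ) → digit s (finFunctionFinEquiv i : Fin (s ^ N)) u =
      digit s (finFunctionFinEquiv j : Fin (s ^ N)) u) ↔ ∀ u, u ≠ a → i u = j u := by
    constructor
    · intro h u hu
      have := h u (by simpa [Fin.ext_iff] using hu)
      rw [digit_enc, digit_enc] at this
      exact Fin.ext this
    · intro h u hu
      by_cases hN : u < N
      · have := h ⟨u, hN⟩ (by simpa [Fin.ext_iff] using hu)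
        have h1 := digit_enc i ⟨u, hN⟩
        have h2 := digit_enc j ⟨u, hN⟩
        simp only at h1 h2
        rw [h1, h2, this]
      · rw [digit_enc_ge _ _ (by omega), digit_enc_ge _ _ (by omega)]
  simp only [hiff, Fin.val_inj, EmbeddingLike.apply_eq_iff_eq]
  simp only [Matrix.sub_apply, Matrix.one_apply, Eop, emb, Matrix.of_apply, Pi.pow_apply]
  by_cases h : i = j
  · subst h; by_cases h' : (i a : ℕ) = b <;> simp [h']
  · by_cases h1 : (i a : ℕ) = b <;> by_cases h2 : (j a : ℕ) = b <;>
      simp [h, h1, h2]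
    split_ifs <;> simp

end Concrete
section Bridge
open Polynomial

variable {F : Type*} [Field F]

/-- Node operator indexed by a natural number. -/
def Nop (lam : ℕ → F) (N s g : ℕ) (m : ℕ) : Matrix (Fin N → Fin s) (Fin N → Fin s) F :=
  if h : m / g < N then Pop lam s g (⟨m / g, h⟩ : Fin N) (m % g) else 0

theorem vecMul_Hcat (lam : ℕ → F) (N s g r : ℕ) (f : ℕ → ℕ) (v : Fin (s ^ N * r) → F)
    (c : ℕ) (hc : f c / g < N) (κ : Fin (s ^ N * r)) (hκ : (κ : ℕ) / s ^ N = c)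
    (j : Fin N → Fin s) (hj : (κ : ℕ) % s ^ N = (finFunctionFinEquiv j : Fin (s ^ N))) :
    (v ᵥ* Hcat lam s g (s ^ N) r f) κ = ∑ z : Fin r, ∑ i : Fin N → Fin s,
      v (finProdFinEquiv (finFunctionFinEquiv i, z)) *
        ((1 - Eop F s ⟨f c / g, hc⟩ (f c % g)) * Lop lam s g ⟨f c / g, hc⟩ (f c % g) ^ (z : ℕ)) i j := by
  rw [Matrix.vecMul, dotProduct, ← finProdFinEquiv.sum_comp, Fintype.sum_prod_type,
    ← finFunctionFinEquiv.sum_comp, Finset.sum_comm]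
  refine Finset.sum_congr rfl fun z _ => Finset.sum_congr rfl fun i _ => ?_
  rw [← Aent_eq]
  congr 1
  simp only [Hcat, Matrix.of_apply, hκ, hj, finProdFinEquiv_apply_val]
  have hr : 0 < r := z.pos
  rw [Nat.add_mul_div_left _ _ hr, Nat.div_eq_of_lt z.2, zero_add, Nat.add_mul_mod_self_left,
    Nat.mod_eq_of_lt z.2]

theorem eval_Nop (lam : ℕ → F) (N s g r : ℕ) (m : ℕ) (hc : m / g < N)
    (u : (Matrix (Fin N → Fin s) (Fin N → Fin s) F)[X]) (hu : u.degree < (r : WithBot ℕ)) :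
    u.eval (Nop lam N s g m) = 0 ↔ ∀ p j, ∑ z : Fin r, ∑ i : Fin N → Fin s,
      u.coeff z p i * ((1 - Eop F s ⟨m / g, hc⟩ (m % g)) *
        Lop lam s g ⟨m / g, hc⟩ (m % g) ^ (z : ℕ)) i j = 0 := by
  have h1 : u.eval (Nop lam N s g m) = (∑ z : Fin r, u.coeff z *
      ((1 - Eop F s ⟨m / g, hc⟩ (m % g)) * Lop lam s g ⟨m / g, hc⟩ (m % g) ^ (z : ℕ))) *
        (1 + Eop F s ⟨m / g, hc⟩ (m % g)) := by
    rw [Nop, dif_pos hc, Finset.sum_mul]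
    rw [Fin.sum_univ_eq_sum_range (fun z => u.coeff z *
      ((1 - Eop F s ⟨m / g, hc⟩ (m % g)) * Lop lam s g ⟨m / g, hc⟩ (m % g) ^ (z : ℕ)) *
        (1 + Eop F s ⟨m / g, hc⟩ (m % g)))]
    rw [eval_eq_sum, sum_over_range' _ (by simp) (r + 1) (by
      have := natDegree_le_of_degree_le hu.le
      omega), Finset.sum_range_succ]
    rw [degree_lt_iff_coeff_zero] at hu
    rw [hu r le_rfl, zero_mul, add_zero]
    refine Finset.sum_congr rfl fun z _ => ?_
    rw [Pop_pow, mul_assoc (u.coeff z)]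
  have hun : IsUnit (1 + Eop F s (⟨m / g, hc⟩ : Fin N) (m % g)) :=
    ⟨⟨_, _, S_mul' _ _, S_mul _ _⟩, rfl⟩
  rw [h1, hun.mul_left_eq_zero, ← Matrix.ext_iff]
  refine forall_congr' fun p => forall_congr' fun j => ?_
  rw [Matrix.sum_apply]
  simp only [Matrix.mul_apply (M := u.coeff _), Matrix.zero_apply]

theorem bridge (lam : ℕ → F) (N s g r : ℕ) (hs : 0 < s) (f : ℕ → ℕ) (G : Finset ℕ)
    (hcard : G.card = r) (hf : ∀ c < r, f c ∈ G) (hf' : ∀ b ∈ G, ∃ c < r, f c = b)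
    (hN : ∀ b ∈ G, b / g < N) :
    (Hcat lam s g (s ^ N) r f).det ≠ 0 ↔ RowInj (Nop lam N s g) G := by
  have hl : 0 < s ^ N := Nat.pow_pos hs
  constructor
  · intro hdet u hu hev
    rw [hcard] at hu
    have hw : ∀ p, (fun ρ : Fin (s ^ N * r) => u.coeff (finProdFinEquiv.symm ρ).2 p
        (finFunctionFinEquiv.symm (finProdFinEquiv.symm ρ).1)) = 0 := by
      intro p
      apply Matrix.eq_zero_of_vecMul_eq_zero hdet
      funext κ
      have hc : (κ : ℕ) / s ^ N < r := Nat.div_lt_of_lt_mul κ.2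
      have hm : (κ : ℕ) % s ^ N < s ^ N := Nat.mod_lt _ hl
      have := (eval_Nop lam N s g r (f (κ / s ^ N)) (hN _ (hf _ hc)) u hu).1 (hev _ (hf _ hc)) p
        (finFunctionFinEquiv.symm ⟨_, hm⟩)
      rw [vecMul_Hcat lam N s g r f _ (κ / s ^ N) (hN _ (hf _ hc)) κ rfl
        (finFunctionFinEquiv.symm ⟨_, hm⟩) (by simp)]
      simpa using this
    ext z p i
    by_cases hz : z < r
    · have := congrFun (hw p) (finProdFinEquiv (finFunctionFinEquiv i, ⟨z, hz⟩))
      simpa using this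
    · rw [degree_lt_iff_coeff_zero] at hu
      rw [hu z (by omega)]; simp
  · intro hR hdet
    obtain ⟨v, hv, hv0⟩ := Matrix.exists_vecMul_eq_zero_iff.2 hdet
    apply hv
    let u : (Matrix (Fin N → Fin s) (Fin N → Fin s) F)[X] :=
      ∑ z : Fin r, monomial z (Matrix.of fun _ i => v (finProdFinEquiv (finFunctionFinEquiv i, z)))
    have hco : ∀ z : Fin r, u.coeff z =
        Matrix.of fun _ i => v (finProdFinEquiv (finFunctionFinEquiv i, z)) := by
      intro z
      simp only [u, finsetSum_coeff, coeff_monomial, Fin.val_inj]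
      simp
    have hu : u.degree < (r : WithBot ℕ) := by
      rw [degree_lt_iff_coeff_zero]
      intro m hm
      simp only [u, finsetSum_coeff, coeff_monomial]
      refine Finset.sum_eq_zero fun z _ => if_neg ?_
      have := z.2
      omega
    have hu0 : u = 0 := by
      apply hR u (by rw [hcard]; exact hu)
      intro b hb
      obtain ⟨c, hc, rfl⟩ := hf' b hb
      rw [eval_Nop lam N s g r (f c) (hN _ hb) u hu]
      intro p j
      have hj := (finFunctionFinEquiv j : Fin (s ^ N)).2
      have hlt : s ^ N * c + (finFunctionFinEquiv j : Fin (s ^ N)) < s ^ N * r := by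
        calc _ < s ^ N * c + s ^ N := by omega
          _ = s ^ N * (c + 1) := by ring
          _ ≤ _ := Nat.mul_le_mul_left _ hc
      have := vecMul_Hcat lam N s g r f v c (hN _ hb) ⟨_, hlt⟩
        (by rw [Nat.mul_add_div hl, Nat.div_eq_of_lt hj, add_zero]) j
        (by rw [Nat.mul_add_mod, Nat.mod_eq_of_lt hj])
      rw [hv0] at this
      simp only [hco, Matrix.of_apply]
      exact this.symm
    funext ρ
    obtain ⟨⟨i, z⟩, rfl⟩ := finProdFinEquiv.surjective ρ
    obtain ⟨i, rfl⟩ := finFunctionFinEquiv.surjective i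
    have := hco z
    rw [hu0] at this
    have := congrFun (congrFun this (fun _ => ⟨0, hs⟩)) i
    simpa using this.symm

theorem AmatB_eq (lam : ℕ → F) (s g l a : ℕ) (B : Finset ℕ) (hB : B ⊆ Finset.range g) :
    AmatB lam s g l a B.card B = Hcat lam s g l B.card (fun c => a * g + enum B c) := by
  ext ρ κ
  have hc : (κ : ℕ) / l < B.card := Nat.div_lt_of_lt_mul κ.2
  have hlt := Finset.mem_range.1 (hB (enum_mem B hc))
  simp only [AmatB, Hcat, Matrix.of_apply]
  rw [mul_comm a g, Nat.mul_add_div (by omega), Nat.div_eq_of_lt hlt, Nat.mul_add_mod,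
    Nat.mod_eq_of_lt hlt, add_zero]

theorem Hcat_det [Fintype F] (lam : ℕ → F) (N s g : ℕ) (hs : 0 < s) (hg : 0 < g)
    (hdist : ∀ i < N * g * s, ∀ j < N * g * s, lam i = lam j → i = j)
    (hloc : LocalConstraints lam s g (s ^ N) N) (Fs : Finset ℕ)
    (hFs : Fs ⊆ Finset.range (N * g)) :
    (Hcat lam s g (s ^ N) Fs.card (enum Fs)).det ≠ 0 := by
  have hdivlt : ∀ b ∈ Finset.range (N * g), b / g < N := fun b hb =>
    (Nat.div_lt_iff_lt_mul hg).2 (Finset.mem_range.1 hb)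
  rw [bridge lam N s g Fs.card hs (enum Fs) Fs rfl (fun c hc => enum_mem Fs hc)
    (fun b hb => enum_surj Fs hb) (fun b hb => hdivlt b (hFs hb))]
  have : Nonempty (Fin N → Fin s) := ⟨fun _ => ⟨0, hs⟩⟩
  refine rowInj_of_local (fun m => m / g) (Finset.range (N * g)) ?_ ?_ ?_ _ Fs hFs rfl
  · intro b hb m hm hne
    rw [Nop, Nop, dif_pos (hdivlt b hb), dif_pos (hdivlt m hm)]
    exact Pop_commute (by simpa [Fin.ext_iff] using hne.symm) _ _ _ _
  · intro b hb m hm hne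
    rw [Nop, Nop, dif_pos (hdivlt b hb), dif_pos (hdivlt m hm)]
    apply Pop_sub_unit (by simpa [Fin.ext_iff] using hne)
    intro j hj j' hj' he
    have hidx : ∀ b ∈ Finset.range (N * g), ∀ j < s,
        b / g * s * g + b % g * s + j = s * b + j := by
      intro b _ j _
      have := Nat.div_add_mod b g
      calc _ = s * (g * (b / g) + b % g) + j := by ring
        _ = _ := by rw [this]
    have hlt : ∀ b ∈ Finset.range (N * g), ∀ j < s, s * b + j < N * g * s := by
      intro b hb j hj
      have hb := Finset.mem_range.1 hb
      calc _ < s * b + s := by omega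
        _ = (b + 1) * s := by ring
        _ ≤ _ := Nat.mul_le_mul_right _ hb
    simp only at he
    rw [hidx b hb j hj, hidx m hm j' hj'] at he
    have h := hdist _ (hlt b hb j hj) _ (hlt m hm j' hj') he
    have h2 := congrArg (· / s) h
    simp only [Nat.mul_add_div hs, Nat.div_eq_of_lt hj, Nat.div_eq_of_lt hj', add_zero] at h2
    exact hne (by rw [h2])
  · intro a B hB hne hgrp
    have ha : a < N := by
      obtain ⟨b, hb⟩ := hne
      rw [← hgrp b hb]; exact hdivlt b (hB hb)
    have hrec : ∀ b ∈ B, a * g + b % g = b := by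
      intro b hb
      rw [← hgrp b hb, mul_comm]; exact Nat.div_add_mod b g
    have hcard : (B.image (· % g)).card = B.card := by
      apply Finset.card_image_of_injOn
      intro b hb b' hb' h
      rw [← hrec b hb, ← hrec b' hb']
      simp only at h
      rw [h]
    have hsub : B.image (· % g) ⊆ Finset.range g := by
      intro x hx
      obtain ⟨b, _, rfl⟩ := Finset.mem_image.1 hx
      exact Finset.mem_range.2 (Nat.mod_lt _ hg)
    have hd := hloc a ha (B.image (· % g)) hsub (hne.image _)
    rw [AmatB_eq _ _ _ _ _ _ hsub] at hd
    refine (bridge lam N s g _ hs _ B hcard.symm ?_ ?_ (fun b hb => hdivlt b (hB hb))).1 hd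
    · intro c hc
      obtain ⟨b, hb, h⟩ := Finset.mem_image.1 (enum_mem _ hc)
      rw [← h, hrec b hb]; exact hb
    · intro b hb
      obtain ⟨c, hc, h⟩ := enum_surj _ (Finset.mem_image_of_mem (· % g) hb)
      exact ⟨c, hc, by rw [h]; exact hrec b hb⟩

end Bridge

/-- second construction, group size `s+1`: with pairwise distinct `λ_i`
satisfying the local constraints, the code of Section 2.2 is an `(n,k,ℓ)` MDS array code:
for every `r`-subset `Fs` of `[n]` the matrix `[H_{f₁} | ⋯ | H_{f_r}]` is invertible;
equivalently, two codewords agreeing outside `Fs` agree everywhere, so any `k` coordinates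
determine the codeword. -/
theorem statement5 (F : Type*) [Field F] [Fintype F] (n k d s ℓ r : ℕ)
    (hk : 1 ≤ k) (hkn : k < n) (hd₁ : k + 1 ≤ d) (hd₂ : d ≤ n - 1)
    (hs : s = d - k + 1) (hdiv : (s + 1) ∣ n) (hℓ : ℓ = s ^ (n / (s + 1))) (hr : r = n - k)
    (lam : ℕ → F)
    (hdist : ∀ i < n * s, ∀ j < n * s, lam i = lam j → i = j)
    (hloc : LocalConstraints lam s (s + 1) ℓ (n / (s + 1))) :
    ∀ Fs : Finset ℕ, Fs ⊆ Finset.range n → Fs.card = r →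
      (Hcat lam s (s + 1) ℓ r (enum Fs)).det ≠ 0 ∧
      (∀ C C' : ℕ → ℕ → F, InCode lam s (s + 1) ℓ r n C → InCode lam s (s + 1) ℓ r n C' →
        (∀ m < n, m ∉ Fs → ∀ j < ℓ, C m j = C' m j) →
        ∀ m < n, ∀ j < ℓ, C m j = C' m j) := by
  obtain ⟨N, rfl⟩ := hdiv
  have hN : (s + 1) * N / (s + 1) = N := Nat.mul_div_cancel_left _ (Nat.succ_pos s)
  rw [hN] at hℓ hloc
  subst hℓ
  intro Fs hFs hcard
  have hs0 : 0 < s := by omega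
  have hdet : (Hcat lam s (s + 1) (s ^ N) r (enum Fs)).det ≠ 0 := by
    rw [← hcard]
    exact Hcat_det lam N s (s + 1) hs0 (Nat.succ_pos s) (by rwa [mul_comm N]) hloc Fs
      (by rwa [mul_comm N])
  refine ⟨hdet, ?_⟩
  intro C C' hC hC' hag m hm j hj
  by_cases hmF : m ∈ Fs
  swap
  · exact hag m hm hmF j hj
  have hl : 0 < s ^ N := Nat.pow_pos hs0
  have hy : (fun κ : Fin (s ^ N * r) => C (enum Fs (κ / s ^ N)) (κ % s ^ N) -
      C' (enum Fs (κ / s ^ N)) (κ % s ^ N)) = 0 := by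
    apply Matrix.eq_zero_of_mulVec_eq_zero hdet
    funext ρ
    have h1 := hC ρ ρ.2
    have h2 := hC' ρ ρ.2
    simp only [Matrix.mulVec, dotProduct, Hcat, Matrix.of_apply, Pi.zero_apply]
    rw [Fin.sum_univ_eq_sum_range (fun κ => Aent lam s (s + 1) (enum Fs (κ / s ^ N) / (s + 1))
      (enum Fs (κ / s ^ N) % (s + 1)) (ρ / r) (κ % s ^ N) (ρ % r) *
      (C (enum Fs (κ / s ^ N)) (κ % s ^ N) - C' (enum Fs (κ / s ^ N)) (κ % s ^ N)))]
    rw [sum_range_mul_aux (s ^ N) r (fun c j => Aent lam s (s + 1) (enum Fs c / (s + 1))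
      (enum Fs c % (s + 1)) (ρ / r) j (ρ % r) * (C (enum Fs c) j - C' (enum Fs c) j))]
    have hse := sum_enum Fs (fun m => ∑ j ∈ Finset.range (s ^ N), Aent lam s (s + 1) (m / (s + 1))
      (m % (s + 1)) (ρ / r) j (ρ % r) * (C m j - C' m j))
    rw [hcard] at hse
    rw [hse, Finset.sum_subset hFs]
    · simp only [mul_sub, Finset.sum_sub_distrib]
      rw [h1, h2, sub_zero]
    · intro m hm hmF
      refine Finset.sum_eq_zero fun j hj => ?_
      rw [hag m (Finset.mem_range.1 hm) hmF j (Finset.mem_range.1 hj), sub_self, mul_zero]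
  obtain ⟨c, hc, rfl⟩ := enum_surj Fs hmF
  rw [hcard] at hc
  have hlt : s ^ N * c + j < s ^ N * r := by
    calc _ < s ^ N * c + s ^ N := by omega
      _ = s ^ N * (c + 1) := by ring
      _ ≤ _ := Nat.mul_le_mul_left _ hc
  have := congrFun hy ⟨_, hlt⟩
  simp only [Nat.mul_add_div hl, Nat.div_eq_of_lt hj, Nat.mul_add_mod, Nat.mod_eq_of_lt hj,
    add_zero, Pi.zero_apply] at this
  exact sub_eq_zero.1 this
end

section
/- Let a ∈ {0,…,n/s−1}, let B ⊆ {0,…,s−1} be nonempty with |B| = v, and let t > v be an integer. Suppose λ_0, …, λ_{ns−1} are pairwise distinct and satisfy the local constraints. Then there exists an ℓt × ℓt matrix M over F_q such that: (i) M · A_{a,B}^(t) equals the block matrix with A_{a,B}^(v) on top and the ℓ(t−v) × ℓv zero matrix below; and (ii) for every a′ with a < a′ < n/s and every b ∈ {0,…,s−1}, M · A_{a′,b}^(t) equals the block matrix with A_{a′,b}^(v) on top and a matrix Â below, where Â = A_{a′,b}^(t−v) · Q for some invertible ℓ × ℓ matrix Q over F_q (i.e., Â is column equivalent to A_{a′,b}^(t−v)).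 -/
open Matrix

namespace S8

section ring
variable {R : Type*} [Ring R]

/-- Existence part and commutation part are consequences of unique solvability. -/
lemma commute_coeff {ι : Type*} (v : ℕ) (X : ι → R) (g : ℕ → R)
    (hinj : ∀ c : ℕ → R, (∀ j, ∑ z ∈ Finset.range v, c z * X j ^ z = 0) → ∀ z < v, c z = 0)
    (hgv : g v = 1)
    (hg : ∀ j, ∑ z ∈ Finset.range (v + 1), g z * X j ^ z = 0)
    (Y : R) (hY : ∀ j, Commute Y (X j)) : ∀ z ≤ v, Commute Y (g z) := by
  intro z hz
  rcases Nat.lt_or_eq_of_le hz with hz | rfl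
  · have := hinj (fun z => Y * g z - g z * Y) ?_ z hz
    · exact sub_eq_zero.mp this
    · intro j
      have h1 := hg j
      have h2 : ∑ z ∈ Finset.range (v + 1), (Y * g z - g z * Y) * X j ^ z = 0 := by
        have : ∀ z ∈ Finset.range (v + 1), (Y * g z - g z * Y) * X j ^ z
            = Y * (g z * X j ^ z) - (g z * X j ^ z) * Y := by
          intro z _
          have := ((hY j).pow_right z).eq
          rw [sub_mul, mul_assoc, mul_assoc, this, mul_assoc]
        rw [Finset.sum_congr rfl this, Finset.sum_sub_distrib, ← Finset.mul_sum,
          ← Finset.sum_mul, h1]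
        simp
      rw [Finset.sum_range_succ, hgv] at h2
      simpa using h2
  · rw [hgv]; exact Commute.one_right Y

lemma left_cancel {ι : Type*} (v : ℕ) (hv : 0 < v) (X : ι → R) (g : ℕ → R)
    (hinj : ∀ c : ℕ → R, (∀ j, ∑ z ∈ Finset.range v, c z * X j ^ z = 0) → ∀ z < v, c z = 0)
    (hgv : g v = 1)
    (hg : ∀ j, ∑ z ∈ Finset.range (v + 1), g z * X j ^ z = 0)
    (L : R) (hL : ∀ j, Commute L (X j)) (hu : ∀ j, IsUnit (X j - L))
    (y : R) (hy : y * ∑ z ∈ Finset.range (v + 1), g z * L ^ z = 0) : y = 0 := by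
  have key := hinj (fun i => ∑ z ∈ Finset.range (v + 1),
    if i < z then y * g z * L ^ (z - 1 - i) else 0) ?_ (v - 1) (by omega)
  · rw [Finset.sum_range_succ, Finset.sum_eq_zero] at key
    · simpa [hgv, hv] using key
    · intro z hz
      rw [Finset.mem_range] at hz
      rw [if_neg (by omega)]
  · intro j
    rw [← (hu j).mul_left_eq_zero]
    have h1 : y * ∑ z ∈ Finset.range (v + 1), g z * (X j ^ z - L ^ z) = 0 := by
      simp only [mul_sub, Finset.sum_sub_distrib, hg j, hy]
      simp
    refine Eq.trans ?_ h1
    rw [Finset.mul_sum, Finset.sum_mul]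
    simp only [Finset.sum_mul]
    rw [Finset.sum_comm]
    refine Finset.sum_congr rfl fun z hz => ?_
    rw [Finset.mem_range] at hz
    rw [← (hL j).symm.geom_sum₂_mul, ← mul_assoc, ← mul_assoc, Finset.mul_sum, Finset.sum_mul]
    have hsub : Finset.range z ⊆ Finset.range v := by
      intro i hi; rw [Finset.mem_range] at *; omega
    symm
    refine (Finset.sum_subset_zero_on_sdiff hsub ?_ ?_)
    · intro i hi
      simp only [Finset.mem_sdiff, Finset.mem_range] at hi
      rw [if_neg (by omega), zero_mul, zero_mul]
    · intro i hi
      rw [Finset.mem_range] at hi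
      rw [if_pos hi]
      congr 1
      rw [mul_assoc _ (L ^ _), (((hL j).pow_left _).pow_right _).eq]
end ring

section digits
variable {F : Type*} [Field F]

open scoped Classical in
/-- Matrix acting on the `a`-th digit only. -/
noncomputable def T {m s : ℕ} (a : Fin m) (K : Fin s → Fin s → F) :
    Matrix (Fin m → Fin s) (Fin m → Fin s) F :=
  Matrix.of fun f g => if ∀ u, u ≠ a → f u = g u then K (f a) (g a) else 0

open scoped Classical in
lemma T_mul {m s : ℕ} (a a' : Fin m) (h : a ≠ a') (K K' : Fin s → Fin s → F)
    (f g : Fin m → Fin s) :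
    (T a K * T a' K') f g =
      if ∀ u, u ≠ a → u ≠ a' → f u = g u then K (f a) (g a) * K' (f a') (g a') else 0 := by
  rw [Matrix.mul_apply, Finset.sum_eq_single (Function.update f a (g a))]
  · have h1 : ∀ u, u ≠ a → f u = Function.update f a (g a) u := by
      intro u hu; simp [hu]
    have h2 : (∀ u, u ≠ a' → Function.update f a (g a) u = g u) ↔
        ∀ u, u ≠ a → u ≠ a' → f u = g u := by
      constructor
      · intro H u h1 h2
        have := H u h2
        rwa [Function.update_of_ne h1] at this
      · intro H u hu
        by_cases hua : u = a
        · subst hua; simp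
        · rw [Function.update_of_ne hua]; exact H u hua hu
    simp only [T, Matrix.of_apply]
    rw [if_pos h1]
    simp only [h2]
    rw [Function.update_self, Function.update_of_ne h.symm]
    split_ifs <;> simp
  · intro k _ hk
    simp only [T, Matrix.of_apply]
    by_cases h1 : ∀ u, u ≠ a → f u = k u
    · by_cases h2 : ∀ u, u ≠ a' → k u = g u
      · exfalso
        apply hk
        funext u
        by_cases hu : u = a
        · subst hu; simp [h2 u h]
        · simp [hu, h1 u hu]
      · simp [h2]
    · simp [h1]
  · simp

lemma T_comm {m s : ℕ} (a a' : Fin m) (h : a ≠ a') (K K' : Fin s → Fin s → F) :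
    Commute (T a K) (T a' K') := by
  classical
  ext f g
  rw [T_mul a a' h, T_mul a' a h.symm]
  have : (∀ u, u ≠ a → u ≠ a' → f u = g u) ↔ (∀ u, u ≠ a' → u ≠ a → f u = g u) :=
    ⟨fun H u h1 h2 => H u h2 h1, fun H u h1 h2 => H u h2 h1⟩
  simp only [this, mul_comm]

/-- slice zero -/
noncomputable def P (lam : ℕ → F) (s ℓ a b : ℕ) : Matrix (Fin ℓ) (Fin ℓ) F :=
  Matrix.of fun i j => Aent lam s s a b i j 0

/-- the diagonal of evaluation points -/
noncomputable def D (lam : ℕ → F) (s ℓ a b : ℕ) : Matrix (Fin ℓ) (Fin ℓ) F :=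
  Matrix.diagonal fun j => lam (a * s * s + b * s + digit s j a)

lemma PD (lam : ℕ → F) (s ℓ a b z : ℕ) (i j : Fin ℓ) :
    (P lam s ℓ a b * D lam s ℓ a b ^ z) i j = Aent lam s s a b i j z := by
  rw [D, Matrix.diagonal_pow, Matrix.mul_diagonal]
  simp only [P, Matrix.of_apply, Aent, Pi.pow_apply]
  split_ifs <;> simp

lemma fe (s m : ℕ) (i : Fin (s ^ m)) (u : Fin m) :
    ((finFunctionFinEquiv.symm i u : Fin s) : ℕ) = digit s i u := by
  simp [digit]

lemma digits_iff (s m : ℕ) (i j : Fin (s ^ m)) (a : Fin m) :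
    (∀ u, u ≠ (a : ℕ) → digit s i u = digit s j u) ↔
      ∀ u, u ≠ a → finFunctionFinEquiv.symm i u = finFunctionFinEquiv.symm j u := by
  constructor
  · intro H u hu
    apply Fin.ext
    rw [fe, fe]
    exact H u (fun h => hu (Fin.ext h))
  · intro H u hu
    by_cases hum : u < m
    · have := H ⟨u, hum⟩ (fun h => hu (congrArg Fin.val h))
      have := congrArg Fin.val this
      rwa [fe, fe] at this
    · have hz : ∀ i : Fin (s ^ m), digit s i u = 0 := by
        intro i
        rcases Nat.eq_zero_or_pos s with rfl | hs
        · have h0 := i.2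
          rcases Nat.eq_zero_or_pos m with rfl | hm
          · simp [digit]
          · exact absurd (lt_of_lt_of_eq h0 (zero_pow hm.ne')) (Nat.not_lt_zero _)
        · have : (i : ℕ) < s ^ u := lt_of_lt_of_le i.2 (Nat.pow_le_pow_right hs (by omega))
          simp [digit, Nat.div_eq_of_lt this]
      rw [hz, hz]

lemma eq_iff (s m : ℕ) (i j : Fin (s ^ m)) (a : Fin m) :
    i = j ↔ (∀ u, u ≠ a → finFunctionFinEquiv.symm i u = finFunctionFinEquiv.symm j u) ∧
      finFunctionFinEquiv.symm i a = finFunctionFinEquiv.symm j a := by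
  constructor
  · rintro rfl; simp
  · rintro ⟨h1, h2⟩
    apply finFunctionFinEquiv.symm.injective
    funext u
    by_cases hu : u = a
    · subst hu; exact h2
    · exact h1 u hu

lemma P_eq (lam : ℕ → F) (s m : ℕ) (a : Fin m) (b : ℕ) :
    ∃ K, P lam s (s ^ m) a b =
      (T a K).submatrix finFunctionFinEquiv.symm finFunctionFinEquiv.symm := by
  classical
  refine ⟨fun x y => if x = y then 1 else if (x : ℕ) = b ∧ (y : ℕ) ≠ b then -1 else 0, ?_⟩
  ext i j
  simp only [P, T, Matrix.of_apply, Matrix.submatrix_apply, Aent, digits_iff, fe, pow_zero]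
  have h1 : ((i : ℕ) = j) ↔ i = j := Fin.ext_iff.symm
  simp only [h1, eq_iff s m i j a]
  split_ifs <;> tauto

lemma D_eq (lam : ℕ → F) (s m : ℕ) (a : Fin m) (b : ℕ) :
    ∃ K, D lam s (s ^ m) a b =
      (T a K).submatrix finFunctionFinEquiv.symm finFunctionFinEquiv.symm := by
  classical
  refine ⟨fun x y => if x = y then lam (a * s * s + b * s + x) else 0, ?_⟩
  ext i j
  simp only [D, T, Matrix.of_apply, Matrix.submatrix_apply, Matrix.diagonal_apply, fe]
  simp only [eq_iff s m i j a]
  split_ifs <;> tauto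

lemma sub_comm' {m s : ℕ} (a a' : Fin m) (h : a ≠ a') (K K' : Fin s → Fin s → F) :
    Commute ((T a K).submatrix finFunctionFinEquiv.symm finFunctionFinEquiv.symm)
      ((T a' K').submatrix finFunctionFinEquiv.symm finFunctionFinEquiv.symm) := by
  unfold Commute SemiconjBy
  rw [Matrix.submatrix_mul_equiv, Matrix.submatrix_mul_equiv, (T_comm a a' h K K').eq]

end digits

section flat
variable {F : Type*} [Field F]

lemma sum_flat (ℓ t : ℕ) (f : ℕ → ℕ → F) :
    ∑ ρ : Fin (ℓ * t), f ((ρ : ℕ) / t) ((ρ : ℕ) % t)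
      = ∑ z ∈ Finset.range t, ∑ k : Fin ℓ, f k z := by
  rw [← Fintype.sum_equiv (finProdFinEquiv (m := ℓ) (n := t))
    (fun p => f p.1 p.2) _ ?_]
  · rw [Fintype.sum_prod_type_right, Finset.sum_range (fun z => ∑ k : Fin ℓ, f k z)]
  · rintro ⟨k, z⟩
    have ht : 0 < t := lt_of_le_of_lt (Nat.zero_le _) z.2
    simp [finProdFinEquiv, Nat.add_mul_div_left _ _ ht, Nat.div_eq_of_lt z.2,
      Nat.mod_eq_of_lt z.2]

/-- unique solvability -/
lemma solve (lam : ℕ → F) (s ℓ a : ℕ) (B : Finset ℕ)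
    (hdet : (AmatB lam s s ℓ a B.card B).det ≠ 0) :
    (∀ c : ℕ → Matrix (Fin ℓ) (Fin ℓ) F,
      (∀ m < B.card, ∑ z ∈ Finset.range B.card,
        c z * (P lam s ℓ a (enum B m) * D lam s ℓ a (enum B m) ^ z) = 0) →
      ∀ z < B.card, c z = 0) ∧
    (∀ E : ℕ → Matrix (Fin ℓ) (Fin ℓ) F, ∃ c : ℕ → Matrix (Fin ℓ) (Fin ℓ) F,
      ∀ m < B.card, ∑ z ∈ Finset.range B.card,
        c z * (P lam s ℓ a (enum B m) * D lam s ℓ a (enum B m) ^ z) = E m) := by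
  classical
  set W := AmatB lam s s ℓ a B.card B with hW
  have hu : IsUnit W.det := isUnit_iff_ne_zero.mpr hdet
  have entry : ∀ (C : ℕ → ℕ → ℕ → F) (c : ℕ → Matrix (Fin ℓ) (Fin ℓ) F)
      (_ : ∀ z < B.card, ∀ i k : Fin ℓ, c z i k = C z i k) (i : Fin ℓ) (m : ℕ) (κ : Fin (ℓ * B.card))
      (j : Fin ℓ) (_ : (κ : ℕ) / ℓ = m) (_ : (κ : ℕ) % ℓ = j),
      ∑ ρ : Fin (ℓ * B.card), C ((ρ : ℕ) % B.card) i ((ρ : ℕ) / B.card) * W ρ κ =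
      (∑ z ∈ Finset.range B.card, c z * (P lam s ℓ a (enum B m) * D lam s ℓ a (enum B m) ^ z)) i j := by
    intro C c hc i m κ j h1 h2
    simp only [hW, AmatB, Matrix.of_apply, h1, h2]
    rw [sum_flat ℓ B.card (fun x y => C y i x * Aent lam s s a (enum B m) x j y), Matrix.sum_apply]
    refine Finset.sum_congr rfl fun z hz => ?_
    rw [Finset.mem_range] at hz
    rw [Matrix.mul_apply]
    refine Finset.sum_congr rfl fun k _ => ?_
    rw [PD, hc z hz]
  constructor
  · intro c hc z hz
    let C : ℕ → ℕ → ℕ → F := fun z i k =>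
      if h : i < ℓ ∧ k < ℓ then c z ⟨i, h.1⟩ ⟨k, h.2⟩ else 0
    ext i k
    have hvec : (fun ρ : Fin (ℓ * B.card) => C ((ρ : ℕ) % B.card) i ((ρ : ℕ) / B.card)) ᵥ* W = 0 := by
      funext κ
      have hl : 0 < ℓ := lt_of_le_of_lt (Nat.zero_le _) i.2
      have hm : (κ : ℕ) / ℓ < B.card := Nat.div_lt_of_lt_mul κ.2
      have := entry C c (by intro z _ i k; simp [C]) i _ κ ⟨(κ : ℕ) % ℓ, Nat.mod_lt _ hl⟩ rfl rfl
      rw [hc _ hm] at this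
      simpa [Matrix.vecMul, dotProduct] using this
    have hzero := Matrix.eq_zero_of_vecMul_eq_zero hdet hvec
    have := congrFun hzero (finProdFinEquiv (k, (⟨z, hz⟩ : Fin B.card)))
    have ht : 0 < B.card := by omega
    simpa [finProdFinEquiv, Nat.add_mul_div_left _ _ ht, Nat.div_eq_of_lt hz,
      Nat.mod_eq_of_lt hz, C] using this
  · intro E
    let X : Matrix (Fin ℓ) (Fin (ℓ * B.card)) F :=
      (Matrix.of fun (i : Fin ℓ) (κ : Fin (ℓ * B.card)) =>
        if h : (κ : ℕ) % ℓ < ℓ then E ((κ : ℕ) / ℓ) i ⟨(κ : ℕ) % ℓ, h⟩ else 0) * W⁻¹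
    have hX : X * W = (Matrix.of fun (i : Fin ℓ) (κ : Fin (ℓ * B.card)) =>
        if h : (κ : ℕ) % ℓ < ℓ then E ((κ : ℕ) / ℓ) i ⟨(κ : ℕ) % ℓ, h⟩ else 0) := by
      simp only [X]
      rw [Matrix.nonsing_inv_mul_cancel_right _ _ hu]
    let C : ℕ → ℕ → ℕ → F := fun z i k =>
      if h : i < ℓ ∧ z + B.card * k < ℓ * B.card then X ⟨i, h.1⟩ ⟨z + B.card * k, h.2⟩ else 0
    refine ⟨fun z => Matrix.of fun i k => C z i k, ?_⟩
    intro m hm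
    ext i j
    have hl : 0 < ℓ := lt_of_le_of_lt (Nat.zero_le _) i.2
    have hκ : (j : ℕ) + ℓ * m < ℓ * B.card := by
      have := j.2
      calc (j : ℕ) + ℓ * m < ℓ + ℓ * m := by omega
        _ = ℓ * (m + 1) := by ring
        _ ≤ ℓ * B.card := Nat.mul_le_mul_left _ hm
    have hd : ((j : ℕ) + ℓ * m) / ℓ = m := by
      rw [Nat.add_mul_div_left _ _ hl, Nat.div_eq_of_lt j.2, zero_add]
    have hmd : ((j : ℕ) + ℓ * m) % ℓ = j := by
      rw [Nat.add_mul_mod_self_left, Nat.mod_eq_of_lt j.2]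
    have := entry C (fun z => Matrix.of fun i k => C z i k) (by intros; rfl) i m
      ⟨(j : ℕ) + ℓ * m, hκ⟩ j hd hmd
    rw [← this]
    have h2 := congrFun (congrFun hX i) ⟨(j : ℕ) + ℓ * m, hκ⟩
    rw [Matrix.mul_apply] at h2
    simp only [Matrix.of_apply, hd, hmd, j.2, dif_pos, Fin.eta] at h2
    rw [← h2]
    refine Finset.sum_congr rfl fun ρ _ => ?_
    have : (ρ : ℕ) % B.card + B.card * ((ρ : ℕ) / B.card) = ρ := Nat.mod_add_div _ _
    simp [C, this]

lemma exists_M (ℓ t v : ℕ) (hv : 0 < v) (ht : v < t) (g : ℕ → Matrix (Fin ℓ) (Fin ℓ) F) :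
    ∃ M : Matrix (Fin (ℓ * t)) (Fin (ℓ * t)) F, ∀ f : ℕ → ℕ → F,
      (∀ ρ : Fin (ℓ * t), (ρ : ℕ) < ℓ * v →
        ∑ σ : Fin (ℓ * t), M ρ σ * f ((σ : ℕ) / t) ((σ : ℕ) % t)
          = f ((ρ : ℕ) / v) ((ρ : ℕ) % v)) ∧
      (∀ ρ : Fin (ℓ * t), ∀ i : Fin ℓ, ¬ (ρ : ℕ) < ℓ * v →
        ((ρ : ℕ) - ℓ * v) / (t - v) = i →
        ∑ σ : Fin (ℓ * t), M ρ σ * f ((σ : ℕ) / t) ((σ : ℕ) % t)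
          = ∑ z ∈ Finset.range (v + 1), ∑ k : Fin ℓ,
            g z i k * f k (z + ((ρ : ℕ) - ℓ * v) % (t - v))) := by
  classical
  let G : ℕ → ℕ → ℕ → F := fun z i k =>
      if h : i < ℓ ∧ k < ℓ then g z ⟨i, h.1⟩ ⟨k, h.2⟩ else 0
  let N : ℕ → ℕ → ℕ → F := fun ρ k z =>
    if ρ < ℓ * v then (if k = ρ / v ∧ z = ρ % v then 1 else 0)
    else if (ρ - ℓ * v) % (t - v) ≤ z ∧ z - (ρ - ℓ * v) % (t - v) ≤ v then
      G (z - (ρ - ℓ * v) % (t - v)) ((ρ - ℓ * v) / (t - v)) k else 0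
  refine ⟨Matrix.of fun ρ σ => N ρ ((σ : ℕ) / t) ((σ : ℕ) % t), fun f => ⟨?_, ?_⟩⟩
  · intro ρ hρ
    simp only [Matrix.of_apply]
    rw [sum_flat ℓ t (fun x y => N ρ x y * f x y)]
    have h1 : (ρ : ℕ) % v < v := Nat.mod_lt _ hv
    have h2 : (ρ : ℕ) / v < ℓ := Nat.div_lt_of_lt_mul (lt_of_lt_of_eq hρ (mul_comm _ _))
    rw [Finset.sum_eq_single ((ρ : ℕ) % v)]
    · rw [Finset.sum_eq_single ⟨(ρ : ℕ) / v, h2⟩]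
      · simp [N, hρ]
      · intro k _ hk
        have : (k : ℕ) ≠ ρ / v := fun h => hk (Fin.ext h)
        simp [N, hρ, this]
      · simp
    · intro z _ hz
      simp [N, hρ, hz]
    · intro h
      exfalso
      apply h
      rw [Finset.mem_range]; omega
  · intro ρ i hρ hi
    simp only [Matrix.of_apply]
    rw [sum_flat ℓ t (fun x y => N ρ x y * f x y)]
    have hw : ((ρ : ℕ) - ℓ * v) % (t - v) < t - v := Nat.mod_lt _ (by omega)
    set w := ((ρ : ℕ) - ℓ * v) % (t - v) with hwd
    symm
    have hN : ∀ z (k : Fin ℓ), N ρ k z = if w ≤ z ∧ z - w ≤ v then g (z - w) i k else 0 := by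
      intro z k
      simp only [N, if_neg hρ, ← hwd, hi]
      simp [G]
    refine Finset.sum_of_injOn (fun z => z + w) ?_ ?_ ?_ ?_
    · intro x _ y _ h
      simpa using h
    · intro x hx
      simp only [Finset.coe_range, Set.mem_Iio] at *
      omega
    · intro z _ hz
      apply Finset.sum_eq_zero
      intro k _
      rw [hN, if_neg, zero_mul]
      rintro ⟨h1, h2⟩
      apply hz
      exact ⟨z - w, by simp; omega, by simp; omega⟩
    · intro z hz
      rw [Finset.mem_range] at hz
      refine Finset.sum_congr rfl fun k _ => ?_
      rw [hN, if_pos (by omega)]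
      simp

end flat

lemma enum_mem (B : Finset ℕ) (m : ℕ) (hm : m < B.card) : enum B m ∈ B := by
  unfold enum
  have h : m < (B.sort (· ≤ ·)).length := by simpa using hm
  rw [List.getD_eq_getElem _ _ h]
  exact (Finset.mem_sort (· ≤ ·)).mp (List.getElem_mem h)

lemma P_unit {F : Type*} [Field F] (lam : ℕ → F) (s ℓ a b : ℕ)
    (hdet : (AmatB lam s s ℓ a ({b} : Finset ℕ).card {b}).det ≠ 0) :
    IsUnit (P lam s ℓ a b) := by
  obtain ⟨c, hc⟩ := (solve lam s ℓ a {b} hdet).2 (fun _ => 1)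
  have := hc 0 (by simp)
  simp [enum] at this
  exact IsUnit.of_mul_eq_one_right _ this

end S8

/-- Lemma 7 of the paper: for `a ∈ [n/s]`, nonempty `B ⊆ [s]` with
`|B| = v < t`, under the local constraints there is an `ℓt × ℓt` matrix `M` such that
(i) `M · A_{a,B}^{(t)}` is `A_{a,B}^{(v)}` stacked over a zero matrix, and
(ii) for all `a < a' < n/s` and `b ∈ [s]`, `M · A_{a',b}^{(t)}` is `A_{a',b}^{(v)}` stacked
over a matrix `Â = A_{a',b}^{(t−v)} · Q` with `Q` invertible (so `Â` is column equivalent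
to `A_{a',b}^{(t−v)}`). -/
theorem statement8 (F : Type*) [Field F] [Fintype F] (n k d s ℓ : ℕ)
    (hk : 1 ≤ k) (hkn : k < n) (hd₁ : k + 1 ≤ d) (hd₂ : d ≤ n - 1)
    (hs : s = d - k + 1) (hdiv : s ∣ n) (hℓ : ℓ = s ^ (n / s))
    (lam : ℕ → F)
    (hdist : ∀ i < n * s, ∀ j < n * s, lam i = lam j → i = j)
    (hloc : LocalConstraints lam s s ℓ (n / s))
    (a : ℕ) (ha : a < n / s)
    (B : Finset ℕ) (hBsub : B ⊆ Finset.range s) (hBne : B.Nonempty)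
    (t : ℕ) (ht : B.card < t) :
    ∃ M : Matrix (Fin (ℓ * t)) (Fin (ℓ * t)) F,
      (∀ (ρ : Fin (ℓ * t)) (κ : Fin (ℓ * B.card)),
        (M * AmatB lam s s ℓ a t B) ρ κ =
          if (ρ : ℕ) < ℓ * B.card then
            Aent lam s s a (enum B ((κ : ℕ) / ℓ)) ((ρ : ℕ) / B.card) ((κ : ℕ) % ℓ)
              ((ρ : ℕ) % B.card)
          else 0) ∧
      (∀ a', a < a' → a' < n / s → ∀ b < s,
        ∃ Q : Matrix (Fin ℓ) (Fin ℓ) F, IsUnit Q ∧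
          ∃ Abot : ℕ → ℕ → F,
            (Matrix.of (fun (p : Fin (ℓ * (t - B.card))) (j : Fin ℓ) =>
                Abot (p : ℕ) (j : ℕ)) = Amat lam s s ℓ a' b (t - B.card) * Q) ∧
            ∀ (ρ : Fin (ℓ * t)) (j : Fin ℓ),
              (M * Amat lam s s ℓ a' b t) ρ j =
                if (ρ : ℕ) < ℓ * B.card then
                  Aent lam s s a' b ((ρ : ℕ) / B.card) (j : ℕ) ((ρ : ℕ) % B.card)
                else Abot ((ρ : ℕ) - ℓ * B.card) (j : ℕ)) := by
  classical
  subst hℓ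
  set m := n / s with hm
  set v := B.card with hv
  have hvpos : 0 < v := Finset.card_pos.mpr hBne
  have hspos : 0 < s := by omega
  have hnm : n * s = m * s * s := by rw [hm, Nat.div_mul_cancel hdiv]
  have hsol := S8.solve lam s (s ^ m) a B (hloc a ha B hBsub hBne)
  have hbs : ∀ j : Fin v, enum B j < s := fun j =>
    Finset.mem_range.mp (hBsub (S8.enum_mem B j j.2))
  have hP : ∀ j : Fin v, IsUnit (S8.P lam s (s ^ m) a (enum B j)) := fun j =>
    S8.P_unit _ _ _ _ _ (hloc a ha {enum B j}
      (by simpa using hbs j) (by simp))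
  choose p hp using hP
  let X : Fin v → Matrix (Fin (s ^ m)) (Fin (s ^ m)) F := fun j =>
    p j * S8.D lam s (s ^ m) a (enum B j) * ((p j)⁻¹ : (Matrix (Fin (s ^ m)) (Fin (s ^ m)) F)ˣ)
  have hXpow : ∀ (j : Fin v) (z : ℕ), X j ^ z * p j =
      S8.P lam s (s ^ m) a (enum B j) * S8.D lam s (s ^ m) a (enum B j) ^ z := by
    intro j z
    rw [show X j ^ z = _ from Units.conj_pow (p j) _ z, ← hp j, mul_assoc, Units.inv_mul, mul_one]
  have hsumX : ∀ (c : ℕ → Matrix (Fin (s ^ m)) (Fin (s ^ m)) F) (j : Fin v) (N : ℕ),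
      (∑ z ∈ Finset.range N, c z * X j ^ z) * p j =
      ∑ z ∈ Finset.range N, c z * (S8.P lam s (s ^ m) a (enum B j)
        * S8.D lam s (s ^ m) a (enum B j) ^ z) := by
    intro c j N
    rw [Finset.sum_mul]
    refine Finset.sum_congr rfl fun z _ => ?_
    rw [mul_assoc, hXpow]
  have hinj : ∀ c : ℕ → Matrix (Fin (s ^ m)) (Fin (s ^ m)) F,
      (∀ j, ∑ z ∈ Finset.range v, c z * X j ^ z = 0) → ∀ z < v, c z = 0 := by
    intro c hc
    refine hsol.1 c ?_
    intro j hj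
    have := hsumX c ⟨j, hj⟩ v
    rw [hc, zero_mul] at this
    exact this.symm
  obtain ⟨c, hc⟩ := hsol.2 (fun j => S8.P lam s (s ^ m) a (enum B j)
    * S8.D lam s (s ^ m) a (enum B j) ^ v)
  obtain ⟨g, hgv, hgc⟩ : ∃ g : ℕ → Matrix (Fin (s ^ m)) (Fin (s ^ m)) F,
      g v = 1 ∧ ∀ z < v, g z = - c z :=
    ⟨fun z => if z = v then 1 else - c z, by simp, fun z hz => by simp [hz.ne]⟩
  have hgP : ∀ j < v, ∑ z ∈ Finset.range (v + 1), g z * (S8.P lam s (s ^ m) a (enum B j)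
        * S8.D lam s (s ^ m) a (enum B j) ^ z) = 0 := by
    intro j hj
    rw [Finset.sum_range_succ, hgv, one_mul, ← hc j hj, ← Finset.sum_add_distrib]
    refine Finset.sum_eq_zero fun z hz => ?_
    rw [hgc z (Finset.mem_range.mp hz)]
    simp
  have hgX : ∀ j, ∑ z ∈ Finset.range (v + 1), g z * X j ^ z = 0 := by
    intro j
    have := hsumX g j (v + 1)
    rw [hgP j j.2] at this
    exact (Units.mul_left_eq_zero (p j)).mp this
  obtain ⟨M, hM⟩ := S8.exists_M (s ^ m) t v hvpos ht g
  have hidx : ∀ ρ : Fin (s ^ m * t), ¬ (ρ : ℕ) < s ^ m * v →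
      (ρ : ℕ) - s ^ m * v < s ^ m * (t - v) := by
    intro ρ h
    have := ρ.2
    rw [Nat.mul_sub]
    omega
  have hidx2 : ∀ ρ : Fin (s ^ m * t), ¬ (ρ : ℕ) < s ^ m * v →
      ((ρ : ℕ) - s ^ m * v) / (t - v) < s ^ m := fun ρ h =>
    Nat.div_lt_of_lt_mul (lt_of_lt_of_eq (hidx ρ h) (mul_comm _ _))
  refine ⟨M, ?_, ?_⟩
  · intro ρ κ
    obtain ⟨h1, h2⟩ := hM (fun x y => Aent lam s s a (enum B ((κ : ℕ) / s ^ m)) x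
      ((κ : ℕ) % s ^ m) y)
    rw [Matrix.mul_apply]
    split_ifs with hρ
    · exact h1 ρ hρ
    · refine (h2 ρ ⟨_, hidx2 ρ hρ⟩ hρ rfl).trans ?_
      have hκ : (κ : ℕ) / s ^ m < v := Nat.div_lt_of_lt_mul κ.2
      have hl : 0 < s ^ m := pow_pos hspos _
      set w := ((ρ : ℕ) - s ^ m * v) % (t - v)
      set i : Fin (s ^ m) := ⟨_, hidx2 ρ hρ⟩
      set b := enum B ((κ : ℕ) / s ^ m) with hb
      let j : Fin (s ^ m) := ⟨(κ : ℕ) % s ^ m, Nat.mod_lt _ hl⟩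
      have h3 : ((∑ z ∈ Finset.range (v + 1), g z * (S8.P lam s (s ^ m) a b
        * S8.D lam s (s ^ m) a b ^ z)) * S8.D lam s (s ^ m) a b ^ w) i j = 0 := by
        rw [hgP _ hκ, zero_mul]; rfl
      rw [Finset.sum_mul, Matrix.sum_apply] at h3
      rw [← h3]
      refine Finset.sum_congr rfl fun z _ => ?_
      rw [mul_assoc, mul_assoc, ← pow_add, Matrix.mul_apply]
      refine Finset.sum_congr rfl fun k _ => ?_
      rw [S8.PD]
  · intro a' haa' ha' b hb
    have hne : (⟨a', ha'⟩ : Fin m) ≠ ⟨a, ha⟩ := by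
      intro h; have := congrArg Fin.val h; simp at this; omega
    have cPP : ∀ b', Commute (S8.P lam s (s ^ m) a' b) (S8.P lam s (s ^ m) a b') := by
      intro b'
      obtain ⟨K, hK⟩ := S8.P_eq lam s m ⟨a', ha'⟩ b
      obtain ⟨K', hK'⟩ := S8.P_eq lam s m ⟨a, ha⟩ b'
      simp only at hK hK'
      rw [hK, hK']; exact S8.sub_comm' _ _ hne _ _
    have cPD : ∀ b', Commute (S8.P lam s (s ^ m) a' b) (S8.D lam s (s ^ m) a b') := by
      intro b'
      obtain ⟨K, hK⟩ := S8.P_eq lam s m ⟨a', ha'⟩ b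
      obtain ⟨K', hK'⟩ := S8.D_eq lam s m ⟨a, ha⟩ b'
      simp only at hK hK'
      rw [hK, hK']; exact S8.sub_comm' _ _ hne _ _
    have cDP : ∀ b', Commute (S8.D lam s (s ^ m) a' b) (S8.P lam s (s ^ m) a b') := by
      intro b'
      obtain ⟨K, hK⟩ := S8.D_eq lam s m ⟨a', ha'⟩ b
      obtain ⟨K', hK'⟩ := S8.P_eq lam s m ⟨a, ha⟩ b'
      simp only at hK hK'
      rw [hK, hK']; exact S8.sub_comm' _ _ hne _ _
    have cDD : ∀ b', Commute (S8.D lam s (s ^ m) a' b) (S8.D lam s (s ^ m) a b') := by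
      intro b'
      obtain ⟨K, hK⟩ := S8.D_eq lam s m ⟨a', ha'⟩ b
      obtain ⟨K', hK'⟩ := S8.D_eq lam s m ⟨a, ha⟩ b'
      simp only at hK hK'
      rw [hK, hK']; exact S8.sub_comm' _ _ hne _ _
    set P' := S8.P lam s (s ^ m) a' b
    set L := S8.D lam s (s ^ m) a' b with hLdef
    have cPX : ∀ j, Commute P' (X j) := by
      intro j
      have h := cPP (enum B j)
      rw [← hp j] at h
      exact (h.mul_right (cPD _)).mul_right h.units_inv_right
    have cLp : ∀ j, Commute L (p j) := by
      intro j
      have h := cDP (enum B j)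
      rwa [← hp j] at h
    have cLX : ∀ j, Commute L (X j) := by
      intro j
      exact ((cLp j).mul_right (cDD _)).mul_right (cLp j).units_inv_right
    have cPg := S8.commute_coeff v X g hinj hgv hgX P' cPX
    have cLg := S8.commute_coeff v X g hinj hgv hgX L cLX
    have hunit : ∀ j, IsUnit (X j - L) := by
      intro j
      have hd : IsUnit (S8.D lam s (s ^ m) a (enum B j) - L) := by
        rw [hLdef, S8.D, S8.D, Matrix.diagonal_sub, Matrix.isUnit_diagonal, Pi.isUnit_iff]
        intro x
        rw [isUnit_iff_ne_zero, sub_ne_zero]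
        have hx1 : digit s x a < s := Nat.mod_lt _ hspos
        have hx2 : digit s x a' < s := Nat.mod_lt _ hspos
        have bound : ∀ α β γ : ℕ, β < s → γ < s → α * s * s + β * s + γ < (α + 1) * s * s := by
          intro α β γ hβ hγ
          have : (β + 1) * s ≤ s * s := Nat.mul_le_mul_right _ hβ
          nlinarith
        have le1 : ∀ α α' : ℕ, α < α' → (α + 1) * s * s ≤ α' * s * s := fun α α' h =>
          Nat.mul_le_mul_right _ (Nat.mul_le_mul_right _ h)
        have b1 := bound a (enum B j) _ (hbs j) hx1
        have b2 := bound a' b _ hb hx2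
        have l1 := le1 a m ha
        have l2 := le1 a' m ha'
        have l3 := le1 a a' haa'
        intro h
        have := hdist _ (by rw [hnm]; omega) _ (by rw [hnm]; omega) h
        omega
      have hXL : X j - L = p j * (S8.D lam s (s ^ m) a (enum B j) - L) *
          ((p j)⁻¹ : (Matrix (Fin (s ^ m)) (Fin (s ^ m)) F)ˣ) := by
        rw [mul_sub, sub_mul, ← (cLp j).eq, mul_assoc L, Units.mul_inv, mul_one]
      rw [hXL]
      exact ((p j).isUnit.mul hd).mul ((p j)⁻¹).isUnit
    let Q := ∑ z ∈ Finset.range (v + 1), g z * L ^ z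
    have hQ : IsUnit Q := by
      by_contra hcon
      rw [Matrix.isUnit_iff_isUnit_det, isUnit_iff_ne_zero, not_not,
        ← Matrix.exists_vecMul_eq_zero_iff] at hcon
      obtain ⟨y, hy0, hy⟩ := hcon
      have h0 := S8.left_cancel v hvpos X g hinj hgv hgX L cLX hunit
        (Matrix.of fun _ => y) (by
          ext i k
          exact congrFun hy k)
      have hl : 0 < s ^ m := pow_pos hspos _
      exact hy0 (congrFun h0 ⟨0, hl⟩)
    refine ⟨Q, hQ, fun x y => if h : x < s ^ m * (t - v) ∧ y < s ^ m then
      (Amat lam s s (s ^ m) a' b (t - v) * Q) ⟨x, h.1⟩ ⟨y, h.2⟩ else 0, ?_, ?_⟩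
    · ext x y
      exact dif_pos ⟨x.2, y.2⟩
    · intro ρ j
      obtain ⟨h1, h2⟩ := hM (fun x y => Aent lam s s a' b x j y)
      rw [Matrix.mul_apply]
      split_ifs with hρ
      · exact h1 ρ hρ
      · have hx : (ρ : ℕ) - s ^ m * v < s ^ m * (t - v) ∧ (j : ℕ) < s ^ m := ⟨hidx ρ hρ, j.2⟩
        refine Eq.trans ?_ (dif_pos hx).symm
        refine (h2 ρ ⟨_, hidx2 ρ hρ⟩ hρ rfl).trans ?_
        set w := ((ρ : ℕ) - s ^ m * v) % (t - v) with hw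
        set i : Fin (s ^ m) := ⟨_, hidx2 ρ hρ⟩ with hi
        have hR : (Amat lam s s (s ^ m) a' b (t - v) * Q) ⟨(ρ : ℕ) - s ^ m * v, hx.1⟩ ⟨j, hx.2⟩
            = (P' * L ^ w * Q) i j := by
          rw [Matrix.mul_apply, Matrix.mul_apply]
          refine Finset.sum_congr rfl fun k _ => ?_
          rw [S8.PD]
          rfl
        rw [hR, Finset.mul_sum, Matrix.sum_apply]
        refine Finset.sum_congr rfl fun z hz => ?_
        have hz' : z ≤ v := Nat.lt_succ_iff.mp (Finset.mem_range.mp hz)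
        have : P' * L ^ w * (g z * L ^ z) = g z * (P' * L ^ (z + w)) := by
          have e := ((cPg z hz').mul_left ((cLg z hz').pow_left w)).eq
          rw [← mul_assoc, e, mul_assoc, mul_assoc, ← pow_add, add_comm w z]
        rw [this, Matrix.mul_apply]
        refine Finset.sum_congr rfl fun k _ => ?_
        rw [S8.PD]
end

section
/- Let g ≠ h be two indices in {0,…,n/s−1}, let π be the permutation of {0,…,ℓ−1} that exchanges the g-th and h-th base-s digits of its argument, and let P be the ℓ × ℓ permutation matrix with P(i,j) = 1 if and only if j = π(i). Let λ̂_0, …, λ̂_{ns−1} be obtained from λ_0, …, λ_{ns−1} by exchanging λ_{gs^2+m} with λ_{hs^2+m} for every m ∈ {0,…,s^2−1}, and let Ĉ be the array code defined exactly as C but with the λ̂_i in place of the λ_i. If (C_0, …, C_{n−1}) ∈ C, then (D_0, …, D_{n−1}) ∈ Ĉ, where D_{gs+b} = P·C_{hs+b} and D_{hs+b} = P·C_{gs+b} for every b ∈ {0,…,s−1}, and D_{as+b} = P·C_{as+b} for every a ∉ {g,h} and b ∈ {0,…,s−1}. In particular C and Ĉ are permutation equivalent. -/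
open Matrix

/-- The permutation `π_{g,h}` of `ℕ` exchanging the `g`-th and `h`-th base-`s` digits. -/
def swapDigits (s g h i : ℕ) : ℕ :=
  i - digit s i g * s ^ g - digit s i h * s ^ h + digit s i h * s ^ g + digit s i g * s ^ h

/-- `λ̂`: the sequence obtained from `λ` by exchanging `λ_{gs²+m}` with `λ_{hs²+m}` for
every `m ∈ [s²]`. -/
def lamHat {F : Type*} [Field F] (lam : ℕ → F) (s g h i : ℕ) : F :=
  if g * s ^ 2 ≤ i ∧ i < g * s ^ 2 + s ^ 2 then lam (h * s ^ 2 + (i - g * s ^ 2))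
  else if h * s ^ 2 ≤ i ∧ i < h * s ^ 2 + s ^ 2 then lam (g * s ^ 2 + (i - h * s ^ 2))
  else lam i

lemma digit_lt (s i u : ℕ) (hs : 0 < s) : digit s i u < s := Nat.mod_lt _ hs

lemma digit_sum_mod (s i N : ℕ) :
    ∑ u ∈ Finset.range N, digit s i u * s ^ u = i % s ^ N := by
  induction N with
  | zero => simp [Nat.mod_one]
  | succ N ih =>
    rw [Finset.sum_range_succ, ih, Nat.mod_pow_succ, digit, Nat.mul_comm]

lemma sum_lt_pow (s N : ℕ) (f : ℕ → ℕ) (hf : ∀ u, f u < s) :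
    ∑ u ∈ Finset.range N, f u * s ^ u < s ^ N := by
  induction N with
  | zero => simp
  | succ N ih =>
    rw [Finset.sum_range_succ, pow_succ]
    have h1 : (f N + 1) * s ^ N ≤ s * s ^ N := Nat.mul_le_mul_right _ (hf N)
    nlinarith

lemma digit_sum (s N : ℕ) (f : ℕ → ℕ) (hf : ∀ u, f u < s) (v : ℕ) :
    digit s (∑ u ∈ Finset.range N, f u * s ^ u) v = if v < N then f v else 0 := by
  have hs : 0 < s := lt_of_le_of_lt (Nat.zero_le _) (hf 0)
  by_cases hv : v < N
  · rw [if_pos hv]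
    induction N with
    | zero => omega
    | succ N ih =>
      rw [Finset.sum_range_succ]
      rcases Nat.lt_succ_iff_lt_or_eq.mp hv with h | h
      · rw [← ih h]
        obtain ⟨e, rfl⟩ := Nat.exists_eq_add_of_lt h
        have : f (v + e + 1) * s ^ (v + e + 1) = s ^ v * (s * (f (v + e + 1) * s ^ e)) := by ring
        rw [this]
        unfold digit
        rw [Nat.add_mul_div_left _ _ (pow_pos hs v), Nat.add_mul_mod_self_left]
      · subst h
        unfold digit
        rw [Nat.add_mul_div_right _ _ (pow_pos hs v), Nat.div_eq_of_lt (sum_lt_pow s v f hf),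
          zero_add, Nat.mod_eq_of_lt (hf v)]
  · rw [if_neg hv]
    unfold digit
    rw [Nat.div_eq_of_lt, Nat.zero_mod]
    exact lt_of_lt_of_le (sum_lt_pow s N f hf) (Nat.pow_le_pow_right hs (by omega))

lemma digit_big (s N i u : ℕ) (hs : 0 < s) (hi : i < s ^ N) (hu : N ≤ u) : digit s i u = 0 := by
  unfold digit
  rw [Nat.div_eq_of_lt, Nat.zero_mod]
  exact lt_of_lt_of_le hi (Nat.pow_le_pow_right hs hu)

lemma sum_two (N g h : ℕ) (hg : g < N) (hh : h < N) (hgh : g ≠ h) (f : ℕ → ℕ) :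
    ∑ u ∈ Finset.range N, f u =
      f g + (f h + ∑ u ∈ ((Finset.range N).erase g).erase h, f u) := by
  rw [Finset.add_sum_erase _ f (by simp [hh, hgh.symm]), Finset.add_sum_erase _ f (by simp [hg])]

lemma swapDigits_eq (s N g h i : ℕ) (hg : g < N) (hh : h < N) (hgh : g ≠ h)
    (hi : i < s ^ N) :
    swapDigits s g h i = ∑ u ∈ Finset.range N, digit s i (Equiv.swap g h u) * s ^ u := by
  have h1 := digit_sum_mod s i N
  rw [Nat.mod_eq_of_lt hi, sum_two N g h hg hh hgh] at h1
  rw [sum_two N g h hg hh hgh, Equiv.swap_apply_left, Equiv.swap_apply_right]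
  have h2 : ∑ u ∈ ((Finset.range N).erase g).erase h, digit s i (Equiv.swap g h u) * s ^ u
      = ∑ u ∈ ((Finset.range N).erase g).erase h, digit s i u * s ^ u := by
    apply Finset.sum_congr rfl
    intro u hu
    simp only [Finset.mem_erase] at hu
    rw [Equiv.swap_apply_of_ne_of_ne hu.2.1 hu.1]
  rw [h2]
  unfold swapDigits
  omega

lemma swapDigits_lt (s N g h i : ℕ) (hs : 0 < s) (hg : g < N) (hh : h < N) (hgh : g ≠ h)
    (hi : i < s ^ N) : swapDigits s g h i < s ^ N := by
  rw [swapDigits_eq s N g h i hg hh hgh hi]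
  exact sum_lt_pow s N _ (fun u => digit_lt _ _ _ hs)

lemma swap_lt (N g h u : ℕ) (hg : g < N) (hh : h < N) (hu : u < N) : Equiv.swap g h u < N := by
  rw [Equiv.swap_apply_def]; split_ifs <;> assumption

lemma digit_swapDigits (s N g h i u : ℕ) (hs : 0 < s) (hg : g < N) (hh : h < N) (hgh : g ≠ h)
    (hi : i < s ^ N) : digit s (swapDigits s g h i) u = digit s i (Equiv.swap g h u) := by
  rw [swapDigits_eq s N g h i hg hh hgh hi, digit_sum s N _ (fun u => digit_lt _ _ _ hs)]
  split_ifs with hu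
  · rfl
  · rw [Equiv.swap_apply_of_ne_of_ne (by omega) (by omega), digit_big s N i u hs hi (by omega)]

lemma digit_ext (s N i j : ℕ) (hi : i < s ^ N) (hj : j < s ^ N)
    (h : ∀ u, digit s i u = digit s j u) : i = j := by
  rw [← Nat.mod_eq_of_lt hi, ← Nat.mod_eq_of_lt hj, ← digit_sum_mod, ← digit_sum_mod]
  simp [h]

lemma swapDigits_invol (s N g h i : ℕ) (hs : 0 < s) (hg : g < N) (hh : h < N) (hgh : g ≠ h)
    (hi : i < s ^ N) : swapDigits s g h (swapDigits s g h i) = i := by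
  have h1 := swapDigits_lt s N g h i hs hg hh hgh hi
  apply digit_ext s N _ _ (swapDigits_lt s N g h _ hs hg hh hgh h1) hi
  intro u
  rw [digit_swapDigits s N g h _ u hs hg hh hgh h1, digit_swapDigits s N g h _ _ hs hg hh hgh hi,
    Equiv.swap_apply_self]

lemma lamHat_eq {F : Type*} [Field F] (lam : ℕ → F) (s g h a b c : ℕ)
    (hb : b < s) (hc : c < s) :
    lamHat lam s g h (a * s * s + b * s + c) = lam (Equiv.swap g h a * s * s + b * s + c) := by
  have hm : b * s + c < s ^ 2 := by nlinarith
  have key : ∀ x, (x * s ^ 2 ≤ a * s * s + b * s + c ∧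
      a * s * s + b * s + c < x * s ^ 2 + s ^ 2) ↔ a = x := by
    intro x
    have e : a * s * s = a * s ^ 2 := by ring
    rw [e]
    constructor
    · rintro ⟨h1, h2⟩
      rcases lt_trichotomy a x with hl | hl | hl
      · have : (a + 1) * s ^ 2 ≤ x * s ^ 2 := Nat.mul_le_mul_right _ hl
        rw [add_mul] at this
        omega
      · exact hl
      · have : (x + 1) * s ^ 2 ≤ a * s ^ 2 := Nat.mul_le_mul_right _ hl
        rw [add_mul] at this
        omega
    · rintro rfl
      constructor <;> omega
  unfold lamHat
  rw [Equiv.swap_apply_def]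
  simp only [key]
  have e : ∀ x y, x * s ^ 2 + (y * s * s + b * s + c - y * s ^ 2) = x * s * s + b * s + c := by
    intro x y
    have e1 : y * s * s = y * s ^ 2 := by ring
    have e2 : x * s * s = x * s ^ 2 := by ring
    omega
  split_ifs with h1 h2
  · subst h1; rw [e]
  · subst h2; rw [e]
  · rfl

lemma Aent_swap {F : Type*} [Field F] (lam : ℕ → F) (s N g h a b i j z : ℕ)
    (hs : 0 < s) (hg : g < N) (hh : h < N) (hgh : g ≠ h) (hb : b < s)
    (hi : i < s ^ N) (hj : j < s ^ N) :
    Aent (fun i => lamHat lam s g h i) s s a b i j z =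
      Aent lam s s (Equiv.swap g h a) b (swapDigits s g h i) (swapDigits s g h j) z := by
  have h1 : swapDigits s g h i = swapDigits s g h j ↔ i = j := by
    constructor
    · intro e
      rw [← swapDigits_invol s N g h i hs hg hh hgh hi, e,
        swapDigits_invol s N g h j hs hg hh hgh hj]
    · rintro rfl; rfl
  have h2 : (∀ u, u ≠ Equiv.swap g h a →
      digit s i (Equiv.swap g h u) = digit s j (Equiv.swap g h u)) ↔
      ∀ u, u ≠ a → digit s i u = digit s j u := by
    constructor
    · intro H u hu
      have := H (Equiv.swap g h u) (fun e => hu ((Equiv.swap g h).injective e))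
      simpa using this
    · intro H u hu
      exact H _ (fun e => hu (by rw [← e, Equiv.swap_apply_self]))
  have h3 : (digit s (swapDigits s g h i) (Equiv.swap g h a) = b ∧
      digit s (swapDigits s g h j) (Equiv.swap g h a) ≠ b ∧
      (∀ u, u ≠ Equiv.swap g h a →
        digit s (swapDigits s g h i) u = digit s (swapDigits s g h j) u)) ↔
      (digit s i a = b ∧ digit s j a ≠ b ∧ ∀ u, u ≠ a → digit s i u = digit s j u) := by
    simp only [digit_swapDigits s N g h i _ hs hg hh hgh hi,
      digit_swapDigits s N g h j _ hs hg hh hgh hj, Equiv.swap_apply_self, h2]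
  have h4 := lamHat_eq lam s g h a b _ hb (digit_lt s j a hs)
  have h5 : digit s (swapDigits s g h j) (Equiv.swap g h a) = digit s j a := by
    rw [digit_swapDigits s N g h j _ hs hg hh hgh hj, Equiv.swap_apply_self]
  unfold Aent
  by_cases c1 : i = j
  · rw [if_pos c1, if_pos (h1.2 c1), h5, ← h4]
  · rw [if_neg c1, if_neg (fun e => c1 (h1.1 e))]
    by_cases c2 : digit s i a = b ∧ digit s j a ≠ b ∧ ∀ u, u ≠ a → digit s i u = digit s j u
    · rw [if_pos c2, if_pos (h3.2 c2), h5, ← h4]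
    · rw [if_neg c2, if_neg (fun e => c2 (h3.1 e))]

/-- Appendix A of the paper: if `(C_0, …, C_{n−1})` is a codeword of `C`,
then the tuple `(D_0, …, D_{n−1})` obtained by exchanging the nodes of groups `g` and `h`
and applying the digit-swapping permutation matrix `P` to every node
(`D_{gs+b} = P·C_{hs+b}`, `D_{hs+b} = P·C_{gs+b}`, `D_{as+b} = P·C_{as+b}` otherwise,
where `(P·v)(i) = v(π_{g,h}(i))`) is a codeword of the code `Ĉ` defined with the exchanged
values `λ̂`; in particular `C` and `Ĉ` are permutation equivalent. -/
theorem statement10 (F : Type*) [Field F] [Fintype F] (n k d s ℓ r : ℕ)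
    (hk : 1 ≤ k) (hkn : k < n) (hd₁ : k + 1 ≤ d) (hd₂ : d ≤ n - 1)
    (hs : s = d - k + 1) (hdiv : s ∣ n) (hℓ : ℓ = s ^ (n / s)) (hr : r = n - k)
    (lam : ℕ → F)
    (g h : ℕ) (hg : g < n / s) (hh : h < n / s) (hgh : g ≠ h)
    (C : ℕ → ℕ → F) (hC : InCode lam s s ℓ r n C) :
    InCode (fun i => lamHat lam s g h i) s s ℓ r n
      (fun m j =>
        C (if m / s = g then h * s + m % s else if m / s = h then g * s + m % s else m)
          (swapDigits s g h j)) := by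
  have hs0 : 0 < s := by omega
  have hr0 : 0 < r := by omega
  subst hℓ
  set N := n / s with hN
  have hnN : N * s = n := Nat.div_mul_cancel hdiv
  intro ρ hρ
  have hi : ρ / r < s ^ N := Nat.div_lt_of_lt_mul (by rwa [Nat.mul_comm])
  have hz : ρ % r < r := Nat.mod_lt _ hr0
  have hi' := swapDigits_lt s N g h _ hs0 hg hh hgh hi
  have hC' := hC (swapDigits s g h (ρ / r) * r + ρ % r) (by nlinarith)
  have e1 : (swapDigits s g h (ρ / r) * r + ρ % r) / r = swapDigits s g h (ρ / r) := by
    rw [Nat.mul_comm, Nat.mul_add_div hr0, Nat.div_eq_of_lt hz, add_zero]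
  have e2 : (swapDigits s g h (ρ / r) * r + ρ % r) % r = ρ % r := by
    rw [Nat.mul_comm, Nat.mul_add_mod, Nat.mod_mod]
  rw [e1, e2] at hC'
  rw [← hC']
  have hdivτ : ∀ m, (Equiv.swap g h (m / s) * s + m % s) / s = Equiv.swap g h (m / s) := by
    intro m
    rw [Nat.mul_comm, Nat.mul_add_div hs0, Nat.div_eq_of_lt (Nat.mod_lt _ hs0), add_zero]
  have hmodτ : ∀ m, (Equiv.swap g h (m / s) * s + m % s) % s = m % s := by
    intro m
    rw [Nat.mul_comm, Nat.mul_add_mod, Nat.mod_mod]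
  have hτlt : ∀ m ∈ Finset.range n, Equiv.swap g h (m / s) * s + m % s ∈ Finset.range n := by
    intro m hm
    rw [Finset.mem_range] at hm ⊢
    have h1 : m / s < N := Nat.div_lt_of_lt_mul (by rw [Nat.mul_comm, hnN]; exact hm)
    have h2 := swap_lt N g h _ hg hh h1
    have h3 := Nat.mod_lt m hs0
    nlinarith
  have hτinv : ∀ m, Equiv.swap g h ((Equiv.swap g h (m / s) * s + m % s) / s) * s +
      (Equiv.swap g h (m / s) * s + m % s) % s = m := by
    intro m
    rw [hdivτ, hmodτ, Equiv.swap_apply_self, Nat.div_add_mod']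
  refine Finset.sum_nbij' (fun m => Equiv.swap g h (m / s) * s + m % s)
    (fun m => Equiv.swap g h (m / s) * s + m % s) hτlt hτlt
    (fun m _ => hτinv m) (fun m _ => hτinv m) ?_
  intro m _
  have hτ : (if m / s = g then h * s + m % s else if m / s = h then g * s + m % s else m) =
      Equiv.swap g h (m / s) * s + m % s := by
    rw [Equiv.swap_apply_def]
    split_ifs
    · rfl
    · rfl
    · rw [Nat.div_add_mod']
  refine Finset.sum_nbij' (swapDigits s g h) (swapDigits s g h) ?_ ?_ ?_ ?_ ?_
  · intro j hj
    rw [Finset.mem_range] at *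
    exact swapDigits_lt s N g h _ hs0 hg hh hgh hj
  · intro j hj
    rw [Finset.mem_range] at *
    exact swapDigits_lt s N g h _ hs0 hg hh hgh hj
  · intro j hj
    rw [Finset.mem_range] at *
    exact swapDigits_invol s N g h _ hs0 hg hh hgh hj
  · intro j hj
    rw [Finset.mem_range] at *
    exact swapDigits_invol s N g h _ hs0 hg hh hgh hj
  · intro j hj
    rw [Finset.mem_range] at hj
    simp only [hτ, hdivτ, hmodτ]
    rw [Aent_swap lam s N g h _ _ _ _ _ hs0 hg hh hgh (Nat.mod_lt _ hs0) hi hj]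
end
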